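/- arXiv:1810.06680 — 2 statements merged into one kernel-verified Lean document; each statement's English description precedes it below -/
import Mathlib

section
/- (Theorem on M_α, second weight condition) Let 0≤α<mn and q = n/(mn−α). Let u_1,…,u_m and v be weights on ℝ^n and write ν = ∏_{i=1}^m u_i^q. Suppose u_1^{mq},…,u_m^{mq} ∈ A_1 and v^{mq} ∈ A_∞. Then there exists a constant C such that for all f_1,…,f_m, ‖M_α(f⃗)/v‖_{L^{q,∞}(ν v^q)} ≤ C ∏_{i=1}^m ‖f_i‖_{L^1(u_i)}. -/
open MeasureTheory ENNReal Set

noncomputable section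

/-- Euclidean space `ℝ^n`. -/
abbrev ESp (n : ℕ) := EuclideanSpace ℝ (Fin n)

/-- An axis-parallel cube with positive finite side length. -/
def IsCube {n : ℕ} (Q : Set (ESp n)) : Prop :=
  ∃ (c : Fin n → ℝ) (h : ℝ), 0 < h ∧ Q = {x : ESp n | ∀ i, c i ≤ x i ∧ x i ≤ c i + h}

/-- The measure `w(E) = ∫_E w` associated to a weight `w`. -/
def wMeas {n : ℕ} (w : ESp n → ℝ) (E : Set (ESp n)) : ℝ≥0∞ :=
  ∫⁻ x in E, ENNReal.ofReal (w x)

/-- A weight: a nonnegative locally integrable function, positive (and finite) a.e. -/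
def IsWeight {n : ℕ} (w : ESp n → ℝ) : Prop :=
  Measurable w ∧ (∀ x, 0 ≤ w x) ∧ (∀ᵐ x ∂(volume : Measure (ESp n)), 0 < w x) ∧
    ∀ Q : Set (ESp n), IsCube Q → wMeas w Q < ⊤

/-- `C` is an admissible `A₁` constant for `w`. -/
def A1Const {n : ℕ} (w : ESp n → ℝ) (C : ℝ≥0∞) : Prop :=
  ∀ Q : Set (ESp n), IsCube Q →
    (volume Q)⁻¹ * wMeas w Q ≤ C * essInf (fun x => ENNReal.ofReal (w x)) (volume.restrict Q)

/-- The Muckenhoupt class `A₁`. -/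
def IsA1 {n : ℕ} (w : ESp n → ℝ) : Prop := ∃ C : ℝ≥0∞, C < ⊤ ∧ A1Const w C

/-- The Muckenhoupt class `A_p`, `1 < p < ∞`. -/
def IsAp {n : ℕ} (w : ESp n → ℝ) (p : ℝ) : Prop :=
  ∃ C : ℝ≥0∞, C < ⊤ ∧ ∀ Q : Set (ESp n), IsCube Q →
    ((volume Q)⁻¹ * wMeas w Q) *
      ((volume Q)⁻¹ * ∫⁻ x in Q, ENNReal.ofReal (w x) ^ (1 - p / (p - 1))) ^ (p - 1) ≤ C

/-- The class `A_∞ = ⋃_{p ≥ 1} A_p`. -/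
def IsAinfty {n : ℕ} (w : ESp n → ℝ) : Prop :=
  IsA1 w ∨ ∃ p : ℝ, 1 < p ∧ IsAp w p

/-- The Hardy–Littlewood maximal function (over cubes). -/
def maxFn {n : ℕ} (f : ESp n → ℝ) (x : ESp n) : ℝ≥0∞ :=
  ⨆ (Q : Set (ESp n)) (_ : IsCube Q) (_ : x ∈ Q),
    (volume Q)⁻¹ * ∫⁻ y in Q, ENNReal.ofReal |f y|

/-- The Fujii–Wilson `A_∞` constant. -/
def FW {n : ℕ} (w : ESp n → ℝ) : ℝ≥0∞ :=
  ⨆ (Q : Set (ESp n)) (_ : IsCube Q),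
    (wMeas w Q)⁻¹ * ∫⁻ x in Q, maxFn (Q.indicator w) x

/-- The weighted weak `L^{q,∞}(w)` quasinorm of `g`. -/
def wnorm {n : ℕ} (g : ESp n → ℝ≥0∞) (q : ℝ) (w : ESp n → ℝ) : ℝ≥0∞ :=
  ⨆ (t : ℝ) (_ : 0 < t), ENNReal.ofReal t * (wMeas w {x | ENNReal.ofReal t < g x}) ^ (1 / q)

/-- The weighted `L¹(w)` norm. -/
def L1norm {n : ℕ} (f : ESp n → ℝ) (w : ESp n → ℝ) : ℝ≥0∞ :=
  ∫⁻ x, ENNReal.ofReal (|f x| * w x)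

/-- The fractional maximal operator `M_α`. -/
def fracM {n : ℕ} (α : ℝ) (f : ESp n → ℝ) (x : ESp n) : ℝ≥0∞ :=
  ⨆ (Q : Set (ESp n)) (_ : IsCube Q) (_ : x ∈ Q),
    ((volume Q) ^ (1 - α / (n : ℝ)))⁻¹ * ∫⁻ y in Q, ENNReal.ofReal |f y|

/-- The fractional integral (Riesz potential) `I_α`. -/
def fracI {n : ℕ} (α : ℝ) (f : ESp n → ℝ) (x : ESp n) : ℝ :=
  ∫ y, f y / dist x y ^ ((n : ℝ) - α)

/-- The multi(sub)linear maximal function `𝓜`. -/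
def multiM {n m : ℕ} (f : Fin m → ESp n → ℝ) (x : ESp n) : ℝ≥0∞ :=
  ⨆ (Q : Set (ESp n)) (_ : IsCube Q) (_ : x ∈ Q),
    ∏ i, (volume Q)⁻¹ * ∫⁻ y in Q, ENNReal.ofReal |f i y|

/-- The multi(sub)linear fractional maximal operator `𝓜_α`. -/
def multiMα {n m : ℕ} (α : ℝ) (f : Fin m → ESp n → ℝ) (x : ESp n) : ℝ≥0∞ :=
  ⨆ (Q : Set (ESp n)) (_ : IsCube Q) (_ : x ∈ Q),
    ∏ i, ((volume Q) ^ (1 - α / ((m : ℝ) * (n : ℝ))))⁻¹ * ∫⁻ y in Q, ENNReal.ofReal |f i y|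

/-- The multilinear fractional integral `𝓘_α`. -/
def multiIα {n m : ℕ} (α : ℝ) (f : Fin m → ESp n → ℝ) (x : ESp n) : ℝ :=
  ∫ y : Fin m → ESp n, (∏ i, f i (y i)) / (∑ i, dist x (y i)) ^ ((m : ℝ) * (n : ℝ) - α)

/-- The multilinear class `A_{(1,…,1)}`. -/
def A11 {n m : ℕ} (w : Fin m → ESp n → ℝ) : Prop :=
  ∃ C : ℝ≥0∞, C < ⊤ ∧ ∀ Q : Set (ESp n), IsCube Q →
    ((volume Q)⁻¹ * ∫⁻ x in Q, ENNReal.ofReal (∏ i, w i x ^ ((m : ℝ)⁻¹))) ^ (m : ℝ) *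
      ∏ i, (essInf (fun x => ENNReal.ofReal (w i x)) (volume.restrict Q))⁻¹ ≤ C




/-- closed box with corner c and side h -/
def cbox {n : ℕ} (c : Fin n → ℝ) (h : ℝ) : Set (ESp n) :=
  {x : ESp n | ∀ i, c i ≤ x i ∧ x i ≤ c i + h}

/-- index of dyadic cubes -/
abbrev DIx (n : ℕ) := ℤ × (Fin n → ℤ)

/-- shifted dyadic cube -/
def dq {n : ℕ} (s : Fin n → ℝ) (J : DIx n) : Set (ESp n) :=
  {x : ESp n | ∀ i, ⌊(x i - s i) / (2 : ℝ) ^ J.1⌋ = J.2 i}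

/-- the dyadic cube of scale k containing x -/
def dix {n : ℕ} (s : Fin n → ℝ) (k : ℤ) (x : ESp n) : DIx n :=
  (k, fun i => ⌊(x i - s i) / (2 : ℝ) ^ k⌋)

/-- order on indices -/
def dle {n : ℕ} (s : Fin n → ℝ) (J K : DIx n) : Prop := J.1 ≤ K.1 ∧ dq s J ⊆ dq s K

lemma isCube_cbox {n : ℕ} (c : Fin n → ℝ) (h : ℝ) (hh : 0 < h) : IsCube (cbox c h) :=
  ⟨c, h, hh, rfl⟩

lemma cbox_eq {n : ℕ} (c : Fin n → ℝ) (h : ℝ) :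
    cbox c h = (WithLp.ofLp : ESp n → Fin n → ℝ) ⁻¹' (univ.pi fun i => Icc (c i) (c i + h)) := by
  ext x; simp [cbox, Pi.le_def, forall_and]

lemma vol_cbox {n : ℕ} (c : Fin n → ℝ) (h : ℝ) :
    volume (cbox c h) = (ENNReal.ofReal h) ^ n := by
  rw [cbox_eq, (PiLp.volume_preserving_ofLp (Fin n)).measure_preimage]
  · rw [Set.pi_univ_Icc, Real.volume_Icc_pi]; simp
  · exact (MeasurableSet.univ_pi fun i => measurableSet_Icc).nullMeasurableSet

lemma meas_cbox {n : ℕ} (c : Fin n → ℝ) (h : ℝ) : MeasurableSet (cbox c h) := by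
  rw [cbox_eq]
  exact (PiLp.volume_preserving_ofLp (Fin n)).measurable
    (MeasurableSet.univ_pi fun i => measurableSet_Icc)

lemma mem_dq_iff {n : ℕ} (s : Fin n → ℝ) (J : DIx n) (x : ESp n) :
    x ∈ dq s J ↔ ∀ i, (J.2 i : ℝ) * 2 ^ J.1 + s i ≤ x i ∧
      x i < (J.2 i : ℝ) * 2 ^ J.1 + s i + 2 ^ J.1 := by
  have h2 : (0 : ℝ) < 2 ^ J.1 := by positivity
  simp only [dq, mem_ofPred_eq]
  refine forall_congr' fun i => ?_
  rw [Int.floor_eq_iff, le_div_iff₀ h2, div_lt_iff₀ h2]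
  constructor
  · rintro ⟨a, b⟩; constructor <;> nlinarith
  · rintro ⟨a, b⟩; constructor <;> nlinarith

lemma dq_eq {n : ℕ} (s : Fin n → ℝ) (J : DIx n) :
    dq s J = (WithLp.ofLp : ESp n → Fin n → ℝ) ⁻¹' (univ.pi fun i =>
      Ico ((J.2 i : ℝ) * 2 ^ J.1 + s i) ((J.2 i : ℝ) * 2 ^ J.1 + s i + 2 ^ J.1)) := by
  ext x; rw [mem_dq_iff]; simp [Set.mem_pi]

lemma vol_dq {n : ℕ} (s : Fin n → ℝ) (J : DIx n) :
    volume (dq s J) = (ENNReal.ofReal (2 ^ J.1)) ^ n := by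
  rw [dq_eq, (PiLp.volume_preserving_ofLp (Fin n)).measure_preimage]
  · rw [Real.volume_pi_Ico]; simp
  · exact (MeasurableSet.univ_pi fun i => measurableSet_Ico).nullMeasurableSet

lemma meas_dq {n : ℕ} (s : Fin n → ℝ) (J : DIx n) : MeasurableSet (dq s J) := by
  rw [dq_eq]
  exact (PiLp.volume_preserving_ofLp (Fin n)).measurable
    (MeasurableSet.univ_pi fun i => measurableSet_Ico)

lemma vol_dq_ne_zero {n : ℕ} (s : Fin n → ℝ) (J : DIx n) : volume (dq s J) ≠ 0 := by
  rw [vol_dq]; have : (0 : ℝ) < 2 ^ J.1 := by positivity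
  simp [this]

lemma vol_dq_ne_top {n : ℕ} (s : Fin n → ℝ) (J : DIx n) : volume (dq s J) ≠ ⊤ := by
  rw [vol_dq]; exact ENNReal.pow_ne_top ENNReal.ofReal_ne_top

lemma dq_ae {n : ℕ} (s : Fin n → ℝ) (J : DIx n) :
    dq s J =ᵐ[volume] cbox (fun i => (J.2 i : ℝ) * 2 ^ J.1 + s i) (2 ^ J.1) := by
  refine ae_eq_of_subset_of_measure_ge ?_ ?_ (meas_dq s J).nullMeasurableSet ?_
  · intro x hx i
    have := (mem_dq_iff s J x).1 hx i
    exact ⟨this.1, this.2.le⟩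
  · rw [vol_dq, vol_cbox]
  · rw [vol_cbox]; exact ENNReal.pow_ne_top ENNReal.ofReal_ne_top

/-- restrict to a dyadic cube = restrict to some cube -/
lemma dq_cube {n : ℕ} (s : Fin n → ℝ) (J : DIx n) :
    ∃ Q : Set (ESp n), IsCube Q ∧ MeasurableSet Q ∧ dq s J ⊆ Q ∧ volume (dq s J) = volume Q ∧
      (volume : Measure (ESp n)).restrict (dq s J) = volume.restrict Q := by
  refine ⟨_, isCube_cbox _ _ (by positivity), meas_cbox _ _, ?_, measure_congr (dq_ae s J),
    Measure.restrict_congr_set (dq_ae s J)⟩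
  intro x hx i
  have := (mem_dq_iff s J x).1 hx i
  exact ⟨this.1, this.2.le⟩

lemma mem_dix {n : ℕ} (s : Fin n → ℝ) (k : ℤ) (x : ESp n) : x ∈ dq s (dix s k x) := by
  intro i; rfl

lemma eq_dix {n : ℕ} {s : Fin n → ℝ} {J : DIx n} {x : ESp n} (h : x ∈ dq s J) :
    J = dix s J.1 x := by
  refine Prod.ext rfl ?_
  funext i; exact (h i).symm

lemma floor_succ_scale (y : ℝ) (k : ℤ) (d : ℕ) :
    ⌊y / (2 : ℝ) ^ (k + d)⌋ = ⌊y / (2 : ℝ) ^ k⌋ / (2 ^ d : ℕ) := by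
  rw [← Int.floor_div_natCast]
  congr 1
  rw [zpow_add₀ (by norm_num)]; push_cast; rw [zpow_natCast, div_div]

lemma dix_mono {n : ℕ} (s : Fin n → ℝ) {k k' : ℤ} (h : k ≤ k') (x : ESp n) :
    dle s (dix s k x) (dix s k' x) := by
  refine ⟨h, fun y hy i => ?_⟩
  obtain ⟨d, rfl⟩ := Int.le.dest h
  have := hy i
  simp only [dix] at this ⊢
  rw [floor_succ_scale, floor_succ_scale, this]

lemma dle_refl {n : ℕ} (s : Fin n → ℝ) (J : DIx n) : dle s J J := ⟨le_rfl, subset_rfl⟩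

lemma dle_of_mem {n : ℕ} {s : Fin n → ℝ} {J K : DIx n} {x : ESp n} (hJ : x ∈ dq s J)
    (hK : x ∈ dq s K) (h : J.1 ≤ K.1) : dle s J K := by
  rw [eq_dix hJ, eq_dix hK]; exact dix_mono s h x

lemma dle_total {n : ℕ} {s : Fin n → ℝ} {J K : DIx n} {x : ESp n} (hJ : x ∈ dq s J)
    (hK : x ∈ dq s K) : dle s J K ∨ dle s K J := by
  rcases le_total J.1 K.1 with h | h
  · exact Or.inl (dle_of_mem hJ hK h)
  · exact Or.inr (dle_of_mem hK hJ h)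

lemma dq_nonempty {n : ℕ} (s : Fin n → ℝ) (J : DIx n) : (dq s J).Nonempty := by
  rw [nonempty_iff_ne_empty]; intro h
  apply vol_dq_ne_zero s J; rw [h]; simp

lemma dle_lt {n : ℕ} {s : Fin n → ℝ} {J K : DIx n} (h : dle s J K) (hne : J ≠ K) :
    J.1 < K.1 := by
  rcases lt_or_eq_of_le h.1 with h1 | h1
  · exact h1
  · exfalso; apply hne
    obtain ⟨x, hx⟩ := dq_nonempty s J
    rw [eq_dix hx, eq_dix (h.2 hx), h1]

/-- Calderon-Zygmund selection -/
def CZ {n : ℕ} (s : Fin n → ℝ) (a : DIx n → ℝ≥0∞) (lam : ℝ≥0∞) (J : DIx n) : Prop :=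
  lam * volume (dq s J) < a J ∧ ∀ K, dle s J K → K ≠ J → a K ≤ lam * volume (dq s K)

lemma CZ_disj {n : ℕ} {s : Fin n → ℝ} {a : DIx n → ℝ≥0∞} {lam : ℝ≥0∞} {J K : DIx n}
    (hJ : CZ s a lam J) (hK : CZ s a lam K) (hne : J ≠ K) : Disjoint (dq s J) (dq s K) := by
  rw [Set.disjoint_left]
  intro x hx hx'
  rcases dle_total hx hx' with h | h
  · exact absurd hK.1 (not_lt.2 (hJ.2 K h hne.symm))
  · exact absurd hJ.1 (not_lt.2 (hK.2 J h hne))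

lemma vol_dq_scale {n : ℕ} (s : Fin n → ℝ) (k : ℤ) (x : ESp n) :
    volume (dq s (dix s (k + 1) x)) = 2 ^ n * volume (dq s (dix s k x)) := by
  rw [vol_dq, vol_dq]
  simp only [dix]
  rw [← mul_pow]
  congr 1
  rw [zpow_add₀ (by norm_num), zpow_one, mul_comm, ENNReal.ofReal_mul (by norm_num)]
  simp

lemma CZ_upper {n : ℕ} {s : Fin n → ℝ} {a : DIx n → ℝ≥0∞} {lam : ℝ≥0∞} {J : DIx n}
    (ha : ∀ J K, dle s J K → a J ≤ a K) (hJ : CZ s a lam J) :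
    a J ≤ 2 ^ n * lam * volume (dq s J) := by
  obtain ⟨x, hx⟩ := dq_nonempty s J
  have e := eq_dix hx
  have h1 : dle s J (dix s (J.1 + 1) x) := by
    conv => arg 2; rw [e]
    exact dix_mono s (by lia) x
  refine (ha _ _ h1).trans ((hJ.2 _ h1 ?_).trans ?_)
  · intro h
    have := congrArg Prod.fst h
    simp [dix] at this
  · rw [vol_dq_scale, ← e]
    apply le_of_eq; ring

lemma CZ_exists {n : ℕ} (hn : 0 < n) {s : Fin n → ℝ} {a : DIx n → ℝ≥0∞} {lam M : ℝ≥0∞}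
    (hM : ∀ J, a J ≤ M) (hM' : M ≠ ⊤) (hlam : lam ≠ 0) {J : DIx n} {x : ESp n}
    (hx : x ∈ dq s J) (hJ : lam * volume (dq s J) < a J) :
    ∃ K, CZ s a lam K ∧ x ∈ dq s K := by
  have hlt : lam ≠ ⊤ := by
    rintro rfl
    rw [ENNReal.top_mul (vol_dq_ne_zero s J)] at hJ
    exact not_top_lt hJ
  let P : ℤ → Prop := fun k => lam * volume (dq s (dix s k x)) < a (dix s k x)
  have hb : ∃ b : ℤ, ∀ z, P z → z ≤ b := by
    obtain ⟨N, hN⟩ := exists_nat_gt (M / lam).toReal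
    refine ⟨N, fun z hz => ?_⟩
    by_contra hzN
    push Not at hzN
    have h1 : lam * volume (dq s (dix s z x)) < M := hz.trans_le (hM _)
    have h2 : volume (dq s (dix s z x)) < M / lam := by
      rw [ENNReal.lt_div_iff_mul_lt (Or.inl hlam) (Or.inl hlt)]
      rwa [mul_comm]
    have hfin : M / lam ≠ ⊤ := ENNReal.div_ne_top hM' hlam
    have h3 : (N : ℝ≥0∞) ≤ volume (dq s (dix s z x)) := by
      rw [vol_dq]
      have h4 : (N : ℝ≥0∞) ≤ ENNReal.ofReal (2 ^ z) := by
        rw [← ENNReal.ofReal_natCast]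
        apply ENNReal.ofReal_le_ofReal
        calc (N : ℝ) ≤ 2 ^ N := by exact_mod_cast Nat.lt_two_pow_self.le
          _ = (2 : ℝ) ^ (N : ℤ) := by simp
          _ ≤ 2 ^ z := zpow_le_zpow_right₀ (by norm_num) hzN.le
      have h5 : 1 ≤ ENNReal.ofReal ((2 : ℝ) ^ z) := by
        rw [← ENNReal.ofReal_one]
        apply ENNReal.ofReal_le_ofReal
        exact one_le_zpow₀ (by norm_num) (by lia)
      exact h4.trans (le_self_pow₀ h5 hn.ne')
    have h6 : (N : ℝ≥0∞) < M / lam := h3.trans_lt h2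
    have h7 := (ENNReal.toReal_lt_toReal (by simp) hfin).2 h6
    simp at h7
    simp at hN
    linarith
  have he : ∃ z, P z := ⟨J.1, by simp only [P]; rw [← eq_dix hx]; exact hJ⟩
  obtain ⟨k, hk, hmax⟩ := Int.exists_greatest_of_bdd hb he
  refine ⟨dix s k x, ⟨hk, fun K hK hne => ?_⟩, mem_dix s k x⟩
  have hxK := hK.2 (mem_dix s k x)
  have hlt := dle_lt hK hne.symm
  by_contra hcon
  push Not at hcon
  have : P K.1 := by simp only [P]; rw [← eq_dix hxK]; exact hcon
  have := hmax _ this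
  simp only [dix] at hlt
  lia

/-- one-dimensional third trick -/
lemma third_trick (N k : ℤ) (hk : k ≤ N) (c h : ℝ) (hh : 3 * h < 2 ^ k) :
    ∃ b : Bool, ⌊(c - (if b then (2 : ℝ) ^ N / 3 else 0)) / 2 ^ k⌋ =
      ⌊(c + h - (if b then (2 : ℝ) ^ N / 3 else 0)) / 2 ^ k⌋ ∨ h < 0 := by
  by_cases hneg : h < 0
  · exact ⟨true, Or.inr hneg⟩
  push Not at hneg
  have h2 : (0 : ℝ) < 2 ^ k := by positivity
  by_contra hcon
  push Not at hcon
  have key : ∀ y : ℝ, ⌊y / 2 ^ k⌋ ≠ ⌊(y + h) / 2 ^ k⌋ → ∃ z : ℤ, y < z * 2 ^ k ∧ z * 2 ^ k ≤ y + h := by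
    intro y hy
    have hle : ⌊y / 2 ^ k⌋ ≤ ⌊(y + h) / 2 ^ k⌋ := by
      apply Int.floor_le_floor; gcongr; linarith
    have hlt := lt_of_le_of_ne hle hy
    refine ⟨⌊(y + h) / 2 ^ k⌋, ?_, ?_⟩
    · rw [← div_lt_iff₀ h2]; exact Int.floor_lt.1 hlt
    · rw [← le_div_iff₀ h2]; exact Int.floor_le _
  obtain ⟨z, hz1, hz2⟩ := key c (by simpa using (hcon false).1)
  obtain ⟨w, hw1, hw2⟩ := key (c - 2 ^ N / 3) (by
    have := (hcon true).1
    simp only [if_true] at this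
    rwa [show c - 2 ^ N / 3 + h = c + h - 2 ^ N / 3 by ring])
  obtain ⟨d, rfl⟩ := Int.le.dest hk
  rw [zpow_add₀ (by norm_num), zpow_natCast] at hw1 hw2
  have e1 : ((3 * (z - w) - 2 ^ d : ℤ) : ℝ) * 2 ^ k < 1 * 2 ^ k := by
    push_cast; nlinarith
  have e2 : (-1 : ℝ) * 2 ^ k < ((3 * (z - w) - 2 ^ d : ℤ) : ℝ) * 2 ^ k := by
    push_cast; nlinarith
  have e3 := lt_of_mul_lt_mul_right e1 h2.le
  have e4 := lt_of_mul_lt_mul_right e2 h2.le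
  have e5 : 3 * (z - w) - 2 ^ d < 1 := by exact_mod_cast e3
  have e6 : -1 < 3 * (z - w) - 2 ^ d := by exact_mod_cast e4
  have e7 : (3 : ℤ) * (z - w) = 2 ^ d := by lia
  have e8 : (3 : ℤ) ∣ 2 ^ d := ⟨_, e7.symm⟩
  have e9 := Int.Prime.dvd_pow' (p := 3) (by norm_num) e8
  norm_num at e9

/-- shift vectors -/
def shft {n : ℕ} (N : ℤ) (b : Fin n → Bool) : Fin n → ℝ :=
  fun i => if b i then (2 : ℝ) ^ N / 3 else 0

lemma cover_cube {n : ℕ} (N : ℤ) (c : Fin n → ℝ) (h : ℝ) (hh : 0 < h) (hN : 6 * h ≤ 2 ^ N) :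
    ∃ (b : Fin n → Bool) (J : DIx n), cbox c h ⊆ dq (shft N b) J ∧
      volume (dq (shft N b) J) ≤ 6 ^ n * volume (cbox c h) := by
  obtain ⟨k, hk1, hk2⟩ := exists_mem_Ico_zpow (x := 6 * h) (y := (2 : ℝ)) (by positivity) (by norm_num)
  have hk3 : 3 * h < 2 ^ k := by
    rw [zpow_add₀ (by norm_num), zpow_one] at hk2; linarith
  have hkN : k ≤ N := by
    by_contra hcon; push Not at hcon
    have : (2 : ℝ) ^ N < 2 ^ k := zpow_lt_zpow_right₀ (by norm_num) hcon
    linarith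
  choose b hb using fun i => third_trick N k hkN (c i) h hk3
  refine ⟨b, dix (shft N b) k (WithLp.toLp 2 c), ?_, ?_⟩
  · intro x hx i
    have h1 := (hb i).resolve_right (by linarith)
    have h2 : (0 : ℝ) < 2 ^ k := by positivity
    simp only [dix, shft]
    apply le_antisymm
    · rw [h1]; apply Int.floor_le_floor; gcongr; exact (hx i).2
    · apply Int.floor_le_floor; gcongr; exact (hx i).1
  · rw [vol_dq, vol_cbox, ← mul_pow]
    gcongr
    simp only [dix]
    calc ENNReal.ofReal (2 ^ k) ≤ ENNReal.ofReal (6 * h) := ENNReal.ofReal_le_ofReal hk1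
      _ = 6 * ENNReal.ofReal h := by rw [ENNReal.ofReal_mul (by norm_num)]; simp

/-- small dyadic cubes inside open sets -/
lemma small_dq {n : ℕ} (s : Fin n → ℝ) (O : Set (ESp n)) (hO : IsOpen O) (x : ESp n) (hx : x ∈ O)
    (k0 : ℤ) : ∃ k ≤ k0, dq s (dix s k x) ⊆ O := by
  have hc : Continuous (WithLp.toLp 2 : (Fin n → ℝ) → ESp n) := PiLp.continuous_toLp 2 _
  have hO' : IsOpen ((WithLp.toLp 2 : (Fin n → ℝ) → ESp n) ⁻¹' O) := hO.preimage hc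
  obtain ⟨ε, hε, hball⟩ := Metric.isOpen_iff.1 hO' (WithLp.ofLp x) (by simpa using hx)
  obtain ⟨N, hN⟩ := exists_pow_lt_of_lt_one hε (show (1 / 2 : ℝ) < 1 by norm_num)
  refine ⟨min k0 (-N), min_le_left _ _, fun y hy => ?_⟩
  have : (WithLp.ofLp y) ∈ Metric.ball (WithLp.ofLp x) ε := by
    rw [Metric.mem_ball, dist_pi_lt_iff hε]
    intro i
    have h1 := (mem_dq_iff _ _ _).1 hy i
    have h2 := (mem_dq_iff _ _ _).1 (mem_dix s (min k0 (-N)) x) i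
    have h3 : (2 : ℝ) ^ (min k0 (-N : ℤ)) < ε := by
      calc (2 : ℝ) ^ (min k0 (-N : ℤ)) ≤ 2 ^ (-N : ℤ) :=
            zpow_le_zpow_right₀ (by norm_num) (min_le_right _ _)
        _ = (1 / 2) ^ N := by simp
        _ < ε := hN
    simp only [dix] at h1 h2
    rw [Real.dist_eq, abs_lt]; constructor <;> linarith [h1.1, h1.2, h2.1, h2.2]
  simpa using hball this




/-- sublevel estimate on all dyadic cubes of all shifted grids -/
def SLw {n : ℕ} (w : ESp n → ℝ≥0∞) (C : ℝ≥0∞) (θ : ℝ) : Prop :=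
  ∀ (s : Fin n → ℝ) (J : DIx n) (lam : ℝ≥0∞),
    volume (dq s J ∩ {x | w x * volume (dq s J) ≤ lam * ∫⁻ y in dq s J, w y}) ≤
      C * lam ^ θ * volume (dq s J)

lemma exists_small_lam (C : ℝ≥0∞) (hC : C ≠ ⊤) (θ : ℝ) (hθ : 0 < θ) :
    ∃ lam : ℝ≥0∞, lam ≠ 0 ∧ lam ≤ 1 ∧ C * lam ^ θ ≤ 1 / 4 := by
  refine ⟨(4 * (C + 1))⁻¹ ^ (1 / θ), ?_, ?_, ?_⟩
  · have : (4 * (C + 1))⁻¹ ≠ 0 := by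
      rw [ENNReal.inv_ne_zero]; finiteness
    intro h
    rw [ENNReal.rpow_eq_zero_iff] at h
    rcases h with h | h
    · exact this h.1
    · have : 0 < 1 / θ := by positivity
      linarith [h.2]
  · apply ENNReal.rpow_le_one _ (by positivity)
    rw [ENNReal.inv_le_one]
    calc (1 : ℝ≥0∞) ≤ 4 * 1 := by norm_num
      _ ≤ 4 * (C + 1) := by gcongr; simp
  · rw [← ENNReal.rpow_mul, one_div_mul_cancel hθ.ne', ENNReal.rpow_one]
    rw [ENNReal.mul_inv (by simp) (by simp), mul_comm, mul_assoc, one_div]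
    calc (4 : ℝ≥0∞)⁻¹ * ((C + 1)⁻¹ * C) ≤ 4⁻¹ * ((C + 1)⁻¹ * (C + 1)) := by gcongr; simp
      _ = 4⁻¹ := by
        rw [ENNReal.inv_mul_cancel (by simp) (by finiteness), mul_one]

lemma half_step {n : ℕ} (w : ESp n → ℝ≥0∞) (hw : Measurable w) (C : ℝ≥0∞) (hC : C ≠ ⊤) (θ : ℝ)
    (hθ : 0 < θ) (hSL : SLw w C θ) (hfin : ∀ s J, ∫⁻ y in dq s J, w y ≠ ⊤) :
    ∃ β : ℝ, 0 < β ∧ β < 1 ∧ ∀ (s : Fin n → ℝ) (J : DIx n) (E : Set (ESp n)), MeasurableSet E →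
      E ⊆ dq s J → volume E ≤ volume (dq s J) / 2 →
      ∫⁻ y in E, w y ≤ ENNReal.ofReal β * ∫⁻ y in dq s J, w y := by
  obtain ⟨lam, h0, h1, h4⟩ := exists_small_lam C hC θ hθ
  have hlt : lam ≠ ⊤ := ne_top_of_le_ne_top one_ne_top h1
  have hpos : 0 < lam.toReal := ENNReal.toReal_pos h0 hlt
  have hle1 : lam.toReal ≤ 1 := by
    have := (ENNReal.toReal_le_toReal hlt one_ne_top).2 h1; simpa using this
  refine ⟨1 - lam.toReal / 4, by linarith, by linarith, fun s J E hE hEJ hvol => ?_⟩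
  set v := volume (dq s J) with hv
  have hv0 : v ≠ 0 := vol_dq_ne_zero s J
  have hvt : v ≠ ⊤ := vol_dq_ne_top s J
  set WJ := ∫⁻ y in dq s J, w y with hWJ
  set B := {x | w x * v ≤ lam * WJ} with hB
  have hBm : MeasurableSet B := measurableSet_le (hw.mul_const _) measurable_const
  have hBv : volume (dq s J ∩ B) ≤ v / 4 := by
    refine (hSL s J lam).trans ?_
    rw [ENNReal.div_eq_inv_mul, ← one_div]; gcongr
  set S := dq s J \ (E ∪ B) with hS
  have hSm : MeasurableSet S := (meas_dq s J).diff (hE.union hBm)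
  -- volume of S
  have hvS : v / 4 ≤ volume S := by
    have hsub : v ≤ volume E + volume (dq s J ∩ B) + volume S := by
      have : dq s J ⊆ E ∪ (dq s J ∩ B) ∪ S := by
        intro x hx
        by_cases hxE : x ∈ E
        · exact Or.inl (Or.inl hxE)
        by_cases hxB : x ∈ B
        · exact Or.inl (Or.inr ⟨hx, hxB⟩)
        · exact Or.inr ⟨hx, by simp [hxE, hxB]⟩
      calc v ≤ volume (E ∪ (dq s J ∩ B) ∪ S) := measure_mono this
        _ ≤ volume (E ∪ (dq s J ∩ B)) + volume S := measure_union_le _ _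
        _ ≤ _ := by gcongr; exact measure_union_le _ _
    have h2 : v ≤ v / 2 + v / 4 + volume S := hsub.trans (by gcongr)
    have h3 : v = v / 2 + v / 4 + v / 4 := by
      rw [add_assoc, ← ENNReal.add_halves (v / 2)]
      have : v / 2 / 2 = v / 4 := by
        rw [div_eq_mul_inv, div_eq_mul_inv, mul_assoc, ← ENNReal.mul_inv (by simp) (by simp)]
        norm_num [div_eq_mul_inv]
      rw [this]
      conv_lhs => rw [← ENNReal.add_halves v, ← ENNReal.add_halves (v / 2), this]
    have h4 : v / 2 + v / 4 ≠ ⊤ := by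
      have : v / 2 ≠ ⊤ := ENNReal.div_ne_top hvt (by simp)
      have : v / 4 ≠ ⊤ := ENNReal.div_ne_top hvt (by simp)
      finiteness
    exact (ENNReal.add_le_add_iff_left h4).1 (h3.symm.le.trans h2)
  have hwS : lam / 4 * WJ ≤ ∫⁻ y in S, w y := by
    calc lam / 4 * WJ = (lam * WJ / v) * (v / 4) := by
          rw [div_eq_mul_inv, div_eq_mul_inv, div_eq_mul_inv]
          calc lam * 4⁻¹ * WJ = lam * WJ * 4⁻¹ * (v⁻¹ * v) := by
                rw [ENNReal.inv_mul_cancel hv0 hvt]; ring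
            _ = _ := by ring
      _ ≤ (lam * WJ / v) * volume S := by gcongr
      _ = ∫⁻ y in S, (lam * WJ / v) := by simp
      _ ≤ ∫⁻ y in S, w y := by
        apply setLIntegral_mono' hSm
        intro x hx
        have : x ∉ B := fun h => hx.2 (Or.inr h)
        have : lam * WJ < w x * v := not_le.1 this
        exact ENNReal.div_le_of_le_mul this.le
  have hsum : (∫⁻ y in E, w y) + lam / 4 * WJ ≤ WJ := by
    calc _ ≤ (∫⁻ y in E, w y) + ∫⁻ y in S, w y := by gcongr
      _ = ∫⁻ y in E ∪ S, w y := by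
        rw [lintegral_union hSm]
        rw [Set.disjoint_left]; intro x hx hx'; exact hx'.2 (Or.inl hx)
      _ ≤ WJ := lintegral_mono_set (by
        apply union_subset hEJ; exact sdiff_subset)
  have hl4 : lam / 4 = ENNReal.ofReal (lam.toReal / 4) := by
    rw [ENNReal.ofReal_div_of_pos (by norm_num), ENNReal.ofReal_toReal hlt]; simp
  have hfinJ : WJ ≠ ⊤ := hfin s J
  rw [ENNReal.ofReal_sub _ (by positivity), ENNReal.ofReal_one, ← hl4, ENNReal.sub_mul (fun _ _ => hfinJ),
    one_mul]
  refine ENNReal.le_sub_of_add_le_right ?_ hsum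
  apply ENNReal.mul_ne_top _ hfinJ
  rw [hl4]; exact ENNReal.ofReal_ne_top

lemma iter_step {n : ℕ} (hn : 0 < n) (w : ESp n → ℝ≥0∞) (β : ℝ≥0∞)
    (hβ : ∀ (s : Fin n → ℝ) (J : DIx n) (E : Set (ESp n)), MeasurableSet E →
      E ⊆ dq s J → volume E ≤ volume (dq s J) / 2 →
      ∫⁻ y in E, w y ≤ β * ∫⁻ y in dq s J, w y) (N : ℕ) :
    ∀ (s : Fin n → ℝ) (J : DIx n) (E : Set (ESp n)), MeasurableSet E → E ⊆ dq s J →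
      volume E * (4 * 2 ^ n) ^ N ≤ volume (dq s J) →
      ∫⁻ y in E, w y ≤ β ^ N * ∫⁻ y in dq s J, w y := by
  induction N with
  | zero => intro s J E _ hEJ _; simpa using lintegral_mono_set hEJ
  | succ N ih =>
    intro s J E hE hEJ hvol
    by_cases hE0 : volume E = 0
    · rw [setLIntegral_measure_zero _ _ hE0]; exact zero_le
    have hEt : volume E ≠ ⊤ := ne_top_of_le_ne_top (vol_dq_ne_top s J) (measure_mono hEJ)
    obtain ⟨O, hEO, hO, hOv⟩ := Set.exists_isOpen_lt_of_lt E (2 * volume E) (by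
      rw [two_mul]; exact ENNReal.lt_add_right hEt hE0)
    set g : DIx n → ℝ≥0∞ := fun K => volume (O ∩ dq s J ∩ dq s K) with hg
    have hgm : ∀ K L, dle s K L → g K ≤ g L := fun K L h => by
      simp only [g]; gcongr; exact h.2
    set lam : ℝ≥0∞ := (2 * 2 ^ n)⁻¹ with hlam
    have h2n : (2 * 2 ^ n : ℝ≥0∞) ≠ 0 := by positivity
    have h2t : (2 * 2 ^ n : ℝ≥0∞) ≠ ⊤ := by finiteness
    have hlam0 : lam ≠ 0 := by rw [hlam, ENNReal.inv_ne_zero]; exact h2t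
    have hlamt : lam ≠ ⊤ := by rw [hlam, Ne, ENNReal.inv_eq_top]; exact h2n
    have hgtot : ∀ K, g K ≤ 2 * volume E := fun K =>
      (measure_mono (inter_subset_left.trans inter_subset_left)).trans hOv.le
    let E1 : Set (ESp n) := ⋃ K ∈ {K | CZ s g lam K}, dq s K
    have hdisj : ({K | CZ s g lam K} : Set (DIx n)).PairwiseDisjoint (dq s) :=
      fun K hK L hL hne => CZ_disj hK hL hne
    have hcount : ({K | CZ s g lam K} : Set (DIx n)).Countable := to_countable _
    have hE1m : MeasurableSet E1 := MeasurableSet.biUnion hcount (fun K _ => meas_dq s K)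
    have hnotJ : 2 * volume E ≤ lam * volume (dq s J) := by
      rw [hlam, ← ENNReal.div_eq_inv_mul, ENNReal.le_div_iff_mul_le (Or.inl h2n) (Or.inl h2t)]
      refine le_trans ?_ hvol
      rw [pow_succ']
      calc 2 * volume E * (2 * 2 ^ n) = volume E * (4 * 2 ^ n * 1) := by ring
        _ ≤ volume E * (4 * 2 ^ n * (4 * 2 ^ n) ^ N) := by
          gcongr
          apply one_le_pow₀
          calc (1 : ℝ≥0∞) ≤ 4 * 1 := by norm_num
            _ ≤ 4 * 2 ^ n := by gcongr; exact one_le_pow₀ (by norm_num)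
    have hsubJ : ∀ K, CZ s g lam K → dq s K ⊆ dq s J := by
      intro K hK
      have hne : (O ∩ dq s J ∩ dq s K).Nonempty := by
        rw [nonempty_iff_ne_empty]; intro h
        have := hK.1
        simp only [g, h, measure_empty] at this
        exact _root_.not_lt_zero this
      obtain ⟨x, ⟨_, hxJ⟩, hxK⟩ := hne
      rcases dle_total hxJ hxK with h | h
      · exfalso
        have h1 : g K ≤ lam * volume (dq s K) := by
          refine (hgtot K).trans (hnotJ.trans ?_)
          gcongr; exact h.2
        exact absurd hK.1 (not_lt.2 h1)
      · exact h.2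
    have hE1J : E1 ⊆ dq s J := iUnion₂_subset hsubJ
    have hEE1 : E ⊆ E1 := by
      intro x hx
      obtain ⟨k, hk, hkO⟩ := small_dq s O hO x (hEO hx) J.1
      have hxk := mem_dix s k x
      have hle : dle s (dix s k x) J := dle_of_mem hxk (hEJ hx) hk
      have hgk : g (dix s k x) = volume (dq s (dix s k x)) := by
        simp only [g]; congr 1
        exact inter_eq_right.2 (subset_inter hkO hle.2)
      have hlt1 : lam < 1 := by
        rw [hlam, ENNReal.inv_lt_one]
        calc (1 : ℝ≥0∞) < 2 * 1 := by norm_num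
            _ ≤ 2 * 2 ^ n := by gcongr; exact one_le_pow₀ (by norm_num)
      have : lam * volume (dq s (dix s k x)) < g (dix s k x) := by
        rw [hgk]
        conv_rhs => rw [← one_mul (volume _)]
        exact (ENNReal.mul_lt_mul_iff_left (vol_dq_ne_zero _ _) (vol_dq_ne_top _ _)).2 hlt1
      obtain ⟨K, hK, hxK⟩ := CZ_exists hn hgtot (by finiteness) hlam0 hxk this
      exact mem_biUnion hK hxK
    have hstep : ∀ K, CZ s g lam K → ∫⁻ y in E ∩ dq s K, w y ≤ β * ∫⁻ y in dq s K, w y := by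
      intro K hK
      refine hβ s K _ (hE.inter (meas_dq s K)) inter_subset_right ?_
      have h1 := CZ_upper hgm hK
      calc volume (E ∩ dq s K) ≤ g K := by
            simp only [g]; gcongr; exact subset_inter hEO hEJ
        _ ≤ _ := h1
        _ = volume (dq s K) / 2 := by
          rw [hlam, ENNReal.mul_inv (by simp) (by simp), mul_comm (2⁻¹ : ℝ≥0∞), ← mul_assoc,
            ENNReal.mul_inv_cancel (by positivity) (by finiteness), one_mul, ENNReal.div_eq_inv_mul]
    have hE1v : lam * volume E1 ≤ 2 * volume E := by
      rw [measure_biUnion hcount hdisj (fun K _ => meas_dq s K), ← ENNReal.tsum_mul_left]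
      calc ∑' K : {K | CZ s g lam K}, lam * volume (dq s K) ≤
            ∑' K : {K | CZ s g lam K}, volume (O ∩ dq s J ∩ dq s K) :=
            ENNReal.tsum_le_tsum fun K => K.2.1.le
        _ = volume (⋃ K ∈ {K | CZ s g lam K}, (O ∩ dq s J ∩ dq s K)) := by
            rw [measure_biUnion hcount]
            · exact hdisj.mono (fun K => inter_subset_right)
            · exact fun K _ => (hO.measurableSet.inter (meas_dq s J)).inter (meas_dq s K)
        _ ≤ volume O := measure_mono (iUnion₂_subset fun K _ =>
            inter_subset_left.trans inter_subset_left)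
        _ ≤ _ := hOv.le
    have hE1v' : volume E1 ≤ volume E * (4 * 2 ^ n) := by
      rw [hlam, ← ENNReal.div_eq_inv_mul, ENNReal.div_le_iff h2n h2t] at hE1v
      refine hE1v.trans (le_of_eq (by ring))
    have hIH := ih s J E1 hE1m hE1J (by
      refine le_trans ?_ hvol
      rw [pow_succ', ← mul_assoc]; gcongr)
    calc ∫⁻ y in E, w y = ∫⁻ y in ⋃ K ∈ {K | CZ s g lam K}, (E ∩ dq s K), w y := by
          congr 2
          rw [← inter_iUnion₂]
          exact (inter_eq_left.2 hEE1).symm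
      _ = ∑' K : {K | CZ s g lam K}, ∫⁻ y in E ∩ dq s K, w y := by
          rw [lintegral_biUnion hcount (fun K _ => hE.inter (meas_dq s K))]
          exact hdisj.mono (fun K => inter_subset_right)
      _ ≤ ∑' K : {K | CZ s g lam K}, β * ∫⁻ y in dq s K, w y :=
          ENNReal.tsum_le_tsum fun K => hstep K K.2
      _ = β * ∫⁻ y in E1, w y := by
          rw [ENNReal.tsum_mul_left, lintegral_biUnion hcount (fun K _ => meas_dq s K) hdisj]
      _ ≤ β * (β ^ N * ∫⁻ y in dq s J, w y) := by gcongr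
      _ = _ := by ring

/-- A_infty power property -/
def PWw {n : ℕ} (w : ESp n → ℝ≥0∞) (C : ℝ≥0∞) (δ : ℝ) : Prop :=
  ∀ (s : Fin n → ℝ) (J : DIx n) (E : Set (ESp n)), MeasurableSet E → E ⊆ dq s J →
    ∀ ρ : ℝ≥0∞, volume E ≤ ρ * volume (dq s J) →
      ∫⁻ y in E, w y ≤ C * ρ ^ δ * ∫⁻ y in dq s J, w y

lemma pow_prop {n : ℕ} (hn : 0 < n) (w : ESp n → ℝ≥0∞) (hw : Measurable w) (C : ℝ≥0∞) (hC : C ≠ ⊤)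
    (θ : ℝ) (hθ : 0 < θ) (hSL : SLw w C θ) (hfin : ∀ s J, ∫⁻ y in dq s J, w y ≠ ⊤) :
    ∃ (C' : ℝ≥0∞) (δ : ℝ), C' ≠ ⊤ ∧ 0 < δ ∧ PWw w C' δ := by
  obtain ⟨β, hβ0, hβ1, hβ⟩ := half_step w hw C hC θ hθ hSL hfin
  set B : ℝ := 4 * 2 ^ n with hB
  have hB1 : 1 < B := by
    have : (1 : ℝ) ≤ 2 ^ n := one_le_pow₀ (by norm_num)
    linarith
  set δ : ℝ := - Real.log β / Real.log B with hδ
  have hlogB : 0 < Real.log B := Real.log_pos hB1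
  have hδ0 : 0 < δ := div_pos (by linarith [Real.log_neg hβ0 hβ1]) hlogB
  have hBδ : B ^ (-δ) = β := by
    rw [Real.rpow_def_of_pos (by linarith), hδ]
    rw [show Real.log B * -(-Real.log β / Real.log B) = Real.log β by field_simp]
    exact Real.exp_log hβ0
  refine ⟨ENNReal.ofReal β⁻¹, δ, ENNReal.ofReal_ne_top, hδ0, fun s J E hE hEJ ρ hρ => ?_⟩
  by_cases hρ1 : 1 ≤ ρ
  · calc ∫⁻ y in E, w y ≤ ∫⁻ y in dq s J, w y := lintegral_mono_set hEJ
      _ = 1 * 1 * ∫⁻ y in dq s J, w y := by simp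
      _ ≤ _ := by
        gcongr
        · rw [← ENNReal.ofReal_one]; apply ENNReal.ofReal_le_ofReal
          exact (one_le_inv₀ hβ0).2 hβ1.le
        · exact ENNReal.one_le_rpow hρ1 hδ0
  push Not at hρ1
  by_cases hρ0 : ρ = 0
  · rw [hρ0, zero_mul, nonpos_iff_eq_zero] at hρ
    rw [setLIntegral_measure_zero _ _ hρ]; exact zero_le
  have hρt : ρ ≠ ⊤ := hρ1.ne_top
  have hr0 : 0 < ρ.toReal := ENNReal.toReal_pos hρ0 hρt
  have hr1 : ρ.toReal ≤ 1 := by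
    have := (ENNReal.toReal_le_toReal hρt one_ne_top).2 hρ1.le; simpa using this
  obtain ⟨N, hN1, hN2⟩ := exists_nat_pow_near (x := ρ.toReal⁻¹) (y := B) ((one_le_inv₀ hr0).2 hr1) hB1
  have hBE : (4 * 2 ^ n : ℝ≥0∞) = ENNReal.ofReal B := by
    rw [hB, ENNReal.ofReal_mul (by norm_num), ENNReal.ofReal_pow (by norm_num)]; simp
  have h1 := iter_step hn w (ENNReal.ofReal β) hβ N s J E hE hEJ (by
    calc volume E * (4 * 2 ^ n) ^ N ≤ ρ * volume (dq s J) * (4 * 2 ^ n) ^ N := by gcongr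
      _ = (ρ * (4 * 2 ^ n) ^ N) * volume (dq s J) := by ring
      _ ≤ 1 * volume (dq s J) := by
        gcongr
        rw [hBE, ← ENNReal.ofReal_toReal hρt, ← ENNReal.ofReal_pow (by linarith),
          ← ENNReal.ofReal_mul hr0.le, ← ENNReal.ofReal_one]
        apply ENNReal.ofReal_le_ofReal
        calc ρ.toReal * B ^ N ≤ ρ.toReal * ρ.toReal⁻¹ := by gcongr
          _ = 1 := mul_inv_cancel₀ hr0.ne'
      _ = _ := one_mul _)
  refine h1.trans ?_
  gcongr
  rw [← ENNReal.ofReal_toReal hρt, ENNReal.ofReal_rpow_of_pos hr0, ← ENNReal.ofReal_mul (by positivity),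
    ← ENNReal.ofReal_pow hβ0.le]
  apply ENNReal.ofReal_le_ofReal
  -- β^N ≤ β⁻¹ ρ^δ ; β^(N+1) = B^(-δ(N+1)) ≤ ρ^δ
  have h2 : β ^ (N + 1) ≤ ρ.toReal ^ δ := by
    calc β ^ (N + 1) = (B ^ (N + 1)) ^ (-δ) := by
          rw [← hBδ, ← Real.rpow_natCast, ← Real.rpow_natCast, ← Real.rpow_mul (by linarith),
            ← Real.rpow_mul (by linarith), mul_comm]
      _ ≤ (ρ.toReal⁻¹) ^ (-δ) :=
          Real.rpow_le_rpow_of_nonpos (by positivity) hN2.le (by linarith)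
      _ = ρ.toReal ^ δ := by
          rw [Real.inv_rpow hr0.le, Real.rpow_neg hr0.le, inv_inv]
  rw [inv_mul_eq_div, le_div_iff₀ hβ0, ← pow_succ]
  exact h2




lemma fin_holder {ι : Type*} (G : Finset ι) {m : ℕ} (hm : 0 < m) (g : Fin m → ι → ℝ≥0∞) :
    ∑ J ∈ G, ∏ j, g j J ^ (1 / (m : ℝ)) ≤ ∏ j, (∑ J ∈ G, g j J) ^ (1 / (m : ℝ)) := by
  let : MeasurableSpace G := ⊤
  have h := ENNReal.lintegral_prod_norm_pow_le (μ := (Measure.count : Measure G)) Finset.univ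
    (f := fun (j : Fin m) (J : G) => g j J) (fun i _ => (measurable_from_top).aemeasurable)
    (p := fun _ => 1 / (m : ℝ)) (by simp; field_simp) (fun i _ => by positivity)
  have e : ∀ φ : ι → ℝ≥0∞, ∫⁻ J : G, φ J ∂Measure.count = ∑ J ∈ G, φ J := by
    intro φ
    rw [lintegral_count, tsum_fintype, Finset.sum_coe_sort G φ]
  rw [e (fun J => ∏ j, g j J ^ (1 / (m : ℝ)))] at h
  refine h.trans (le_of_eq ?_)
  refine Finset.prod_congr rfl fun j _ => ?_
  rw [e (fun J => g j J)]

lemma sum_rpow_le {ι : Type*} (G : Finset ι) (r : ℝ) (hr : 1 ≤ r) (g : ι → ℝ≥0∞) :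
    ∑ J ∈ G, g J ^ r ≤ (∑ J ∈ G, g J) ^ r := by
  classical
  induction G using Finset.induction_on with
  | empty => simp
  | insert a s ha ih =>
    rw [Finset.sum_insert ha, Finset.sum_insert ha]
    calc _ ≤ g a ^ r + (∑ J ∈ s, g J) ^ r := by gcongr
      _ ≤ _ := ENNReal.add_rpow_le_rpow_add _ _ hr

lemma super_add {ι : Type*} (G : Finset ι) {m : ℕ} (hm : 0 < m) (q : ℝ) (hq : 1 ≤ m * q)
    (g : Fin m → ι → ℝ≥0∞) :
    ∑ J ∈ G, ∏ j, g j J ^ q ≤ ∏ j, (∑ J ∈ G, g j J) ^ q := by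
  have hm' : (m : ℝ) ≠ 0 := by positivity
  have e : ∀ y : ℝ≥0∞, y ^ q = (y ^ (m * q)) ^ (1 / (m : ℝ)) := by
    intro y; rw [← ENNReal.rpow_mul]; congr 1; field_simp
  simp_rw [e]
  refine (fin_holder G hm _).trans ?_
  refine Finset.prod_le_prod' fun j _ => ?_
  gcongr
  exact sum_rpow_le G _ hq _

lemma sel_exists {ι α : Type*} [LinearOrder α] {m : ℕ} (hm : 0 < m) (le : ι → ι → Prop)
    (hrefl : ∀ J, le J J) (size : ι → α) (hsize : ∀ J K, le J K → J ≠ K → size J < size K)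
    (x : Fin m → ι → ℝ≥0∞) (G : Finset ι) :
    ∃ S ⊆ G, (∀ J ∈ G, ∃ K ∈ S, le J K ∧ ∃ j, x j J ≤ 2 * x j K) ∧
      (∀ K ∈ S, ∀ K' ∈ S, le K' K → K' ≠ K → ∀ j, 2 * x j K ≤ x j K') := by
  classical
  induction G using Finset.induction_on_min_value size with
  | empty => exact ⟨∅, by simp, by simp, by simp⟩
  | insert a s ha hmin ih =>
    obtain ⟨S, hSG, hcov, hst⟩ := ih
    by_cases hc : ∃ K ∈ S, le a K ∧ ∃ j, x j a ≤ 2 * x j K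
    · refine ⟨S, hSG.trans (Finset.subset_insert _ _), ?_, hst⟩
      intro J hJ
      rcases Finset.mem_insert.1 hJ with rfl | hJ
      · exact hc
      · exact hcov J hJ
    · push Not at hc
      refine ⟨insert a S, Finset.insert_subset_insert _ hSG, ?_, ?_⟩
      · intro J hJ
        rcases Finset.mem_insert.1 hJ with rfl | hJ
        · refine ⟨J, Finset.mem_insert_self _ _, hrefl _, ⟨0, hm⟩, ?_⟩
          rw [two_mul]; exact le_self_add
        · obtain ⟨K, hK, h⟩ := hcov J hJ
          exact ⟨K, Finset.mem_insert_of_mem hK, h⟩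
      · intro K hK K' hK' hle hne j
        rcases Finset.mem_insert.1 hK with rfl | hKS
        · rcases Finset.mem_insert.1 hK' with rfl | hK'
          · exact absurd rfl hne
          · exact absurd (hsize _ _ hle hne) (not_lt.2 (hmin K' (hSG hK')))
        · rcases Finset.mem_insert.1 hK' with rfl | hK'
          · exact (hc K hKS hle j).le
          · exact hst K hKS K' hK' hle hne j

lemma chain_sum {ι : Type*} (x : ι → ℝ≥0∞) (S : Finset ι) :
    ∀ B : ℝ≥0∞, (∀ K ∈ S, x K ≤ B) →
      (∀ K ∈ S, ∀ K' ∈ S, K ≠ K' → 2 * x K ≤ x K' ∨ 2 * x K' ≤ x K) →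
      ∑ K ∈ S, x K ≤ 2 * B := by
  classical
  induction S using Finset.induction_on_max_value x with
  | empty => simp
  | insert a s ha hmax ih =>
    intro B hB hch
    rw [Finset.sum_insert ha]
    have h1 : ∀ K ∈ s, x K ≤ x a / 2 := by
      intro K hK
      have hne : K ≠ a := fun h => ha (h ▸ hK)
      rw [ENNReal.le_div_iff_mul_le (by simp) (by simp), mul_comm]
      rcases hch K (Finset.mem_insert_of_mem hK) a (Finset.mem_insert_self _ _) hne with h | h
      · exact h
      · -- x a ≤ x K / 2 , x K ≤ x a
        calc 2 * x K ≤ 2 * x a := by gcongr; exact hmax K hK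
          _ ≤ x K := h
          _ ≤ x a := hmax K hK
    have h2 := ih (x a / 2) h1 (fun K hK K' hK' => hch K (Finset.mem_insert_of_mem hK) K'
      (Finset.mem_insert_of_mem hK'))
    rw [ENNReal.mul_div_cancel (by simp) (by simp)] at h2
    calc x a + ∑ K ∈ s, x K ≤ x a + x a := by gcongr
      _ = 2 * x a := (two_mul _).symm
      _ ≤ 2 * B := by gcongr; exact hB a (Finset.mem_insert_self _ _)

lemma pack_level {ι : Type*} {m : ℕ} (hm : 0 < m) (r : ℝ) (hr : 0 < r)
    (A : ℝ≥0∞) (hA0 : A ≠ 0) (hAt : A ≠ ⊤) (H : Finset ι) (k t l : ℝ) (vol w : ι → ℝ≥0∞)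
    (U x : Fin m → ι → ℝ≥0∞) (C1 C2 : ℝ≥0∞) (K : ι) (j0 : Fin m)
    (hx : ∀ J ∈ H, x j0 J ≤ 2 * x j0 K)
    (hwH : ∑ J ∈ H, w J ≤ C2 * w K)
    (hUH : ∀ j, ∑ J ∈ H, U j J ≤ U j K)
    (hw1 : ∀ J ∈ H, A ^ (m * k + l) * vol J ≤ w J)
    (hw2 : w K ≤ A ^ (m * t + l + 1) * vol K)
    (hU1 : ∀ j J, U j J ≤ C1 * x j J ^ r * vol J)
    (hU2 : ∀ j J, x j J ^ r * vol J ≤ U j J) :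
    ∑ J ∈ H, A ^ k * ∏ j, U j J ^ (1 / (m : ℝ)) ≤
      (C1 * 2 ^ r * C2 * A) ^ (1 / (m : ℝ)) * (A ^ t * ∏ j, U j K ^ (1 / (m : ℝ))) := by
  classical
  have hm' : (m : ℝ) ≠ 0 := by positivity
  have hp : (0 : ℝ) ≤ 1 / (m : ℝ) := by positivity
  let g : Fin m → ι → ℝ≥0∞ := fun j J => if j = j0 then w J else U j J
  have eA : ∀ z : ℝ, A ^ z = (A ^ (m * z)) ^ (1 / (m : ℝ)) := by
    intro z; rw [← ENNReal.rpow_mul]; congr 1; field_simp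
  set D : ℝ≥0∞ := (A ^ (-l) * (C1 * (2 ^ r * x j0 K ^ r))) ^ (1 / (m : ℝ)) with hD
  have h1 : ∀ J ∈ H, A ^ k * ∏ j, U j J ^ (1 / (m : ℝ)) ≤ D * ∏ j, g j J ^ (1 / (m : ℝ)) := by
    intro J hJ
    rw [← Finset.mul_prod_erase Finset.univ (fun j => U j J ^ (1 / (m : ℝ))) (Finset.mem_univ j0),
      ← Finset.mul_prod_erase Finset.univ (fun j => g j J ^ (1 / (m : ℝ))) (Finset.mem_univ j0),
      ← mul_assoc, ← mul_assoc]
    have e2 : ∏ j ∈ Finset.univ.erase j0, U j J ^ (1 / (m : ℝ)) =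
        ∏ j ∈ Finset.univ.erase j0, g j J ^ (1 / (m : ℝ)) := by
      refine Finset.prod_congr rfl fun j hj => ?_
      simp [g, (Finset.mem_erase.1 hj).1]
    rw [e2]
    refine mul_le_mul' ?_ le_rfl
    have : g j0 J = w J := by simp [g]
    rw [this, eA k, hD, ← ENNReal.mul_rpow_of_nonneg _ _ hp, ← ENNReal.mul_rpow_of_nonneg _ _ hp]
    refine ENNReal.rpow_le_rpow ?_ hp
    calc A ^ (m * k) * U j0 J ≤ A ^ (m * k) * (C1 * (2 * x j0 K) ^ r * vol J) := by
          gcongr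
          exact (hU1 j0 J).trans (by gcongr; exact hx J hJ)
      _ = A ^ (-l) * (C1 * (2 ^ r * x j0 K ^ r)) * (A ^ (m * k + l) * vol J) := by
          rw [ENNReal.mul_rpow_of_nonneg _ _ hr.le]
          have : A ^ (m * k) = A ^ (-l) * A ^ (m * k + l) := by
            rw [← ENNReal.rpow_add _ _ hA0 hAt]; congr 1; ring
          rw [this]; ring
      _ ≤ _ := by gcongr; exact hw1 J hJ
  calc ∑ J ∈ H, A ^ k * ∏ j, U j J ^ (1 / (m : ℝ)) ≤ ∑ J ∈ H, D * ∏ j, g j J ^ (1 / (m : ℝ)) :=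
        Finset.sum_le_sum h1
    _ = D * ∑ J ∈ H, ∏ j, g j J ^ (1 / (m : ℝ)) := by rw [Finset.mul_sum]
    _ ≤ D * ∏ j, (∑ J ∈ H, g j J) ^ (1 / (m : ℝ)) := by gcongr; exact fin_holder H hm g
    _ ≤ D * ((C2 * w K) ^ (1 / (m : ℝ)) * ∏ j ∈ Finset.univ.erase j0, U j K ^ (1 / (m : ℝ))) := by
        gcongr
        rw [← Finset.mul_prod_erase Finset.univ _ (Finset.mem_univ j0)]
        gcongr with j hj
        · simpa [g] using hwH
        · simpa [g, (Finset.mem_erase.1 hj).1] using hUH j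
    _ ≤ _ := by
        rw [← Finset.mul_prod_erase Finset.univ (fun j => U j K ^ (1 / (m : ℝ))) (Finset.mem_univ j0),
          ← mul_assoc, ← mul_assoc, ← mul_assoc]
        refine mul_le_mul' ?_ le_rfl
        rw [eA t, hD, ← ENNReal.mul_rpow_of_nonneg _ _ hp, ← ENNReal.mul_rpow_of_nonneg _ _ hp,
          ← ENNReal.mul_rpow_of_nonneg _ _ hp]
        refine ENNReal.rpow_le_rpow ?_ hp
        calc A ^ (-l) * (C1 * (2 ^ r * x j0 K ^ r)) * (C2 * w K)
            ≤ A ^ (-l) * (C1 * (2 ^ r * x j0 K ^ r)) * (C2 * (A ^ (m * t + l + 1) * vol K)) := by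
              gcongr
          _ = C1 * 2 ^ r * C2 * (A ^ (-l) * A ^ (m * t + l + 1)) * (x j0 K ^ r * vol K) := by ring
          _ = C1 * 2 ^ r * C2 * (A * A ^ (m * t)) * (x j0 K ^ r * vol K) := by
              congr 2
              rw [← ENNReal.rpow_add _ _ hA0 hAt]
              conv_rhs => rw [← ENNReal.rpow_one A, ← ENNReal.rpow_mul,
                ← ENNReal.rpow_add _ _ hA0 hAt]
              congr 1; ring
          _ ≤ C1 * 2 ^ r * C2 * (A * A ^ (m * t)) * U j0 K := by gcongr; exact hU2 j0 K
          _ = _ := by ring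

lemma packing {ι : Type*} {m : ℕ} (hm : 0 < m) (r : ℝ) (hr : 0 < r)
    (A : ℝ≥0∞) (hA1 : 1 < A) (hAt : A ≠ ⊤) (H : Finset ι) (lev : ι → ℤ) (l : ℝ)
    (vol w : ι → ℝ≥0∞)
    (U x : Fin m → ι → ℝ≥0∞) (C1 C2 : ℝ≥0∞) (ε : ℝ) (K : ι) (j0 : Fin m)
    (hx : ∀ J ∈ H, x j0 J ≤ 2 * x j0 K)
    (hlev : ∀ J ∈ H, lev K ≤ lev J)
    (hwH : ∀ s : ℕ, ∑ J ∈ H with lev J = lev K + s, w J ≤ C2 * A ^ (-(ε * s)) * w K)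
    (hUH : ∀ (s : ℕ) j, ∑ J ∈ H with lev J = lev K + s, U j J ≤ U j K)
    (hw1 : ∀ J ∈ H, A ^ (m * (lev J : ℝ) + l) * vol J ≤ w J)
    (hw2 : w K ≤ A ^ (m * (lev K : ℝ) + l + 1) * vol K)
    (hU1 : ∀ j J, U j J ≤ C1 * x j J ^ r * vol J)
    (hU2 : ∀ j J, x j J ^ r * vol J ≤ U j J) :
    ∑ J ∈ H, A ^ (lev J : ℝ) * ∏ j, U j J ^ (1 / (m : ℝ)) ≤
      ((C1 * 2 ^ r * C2 * A) ^ (1 / (m : ℝ)) * (1 - A ^ (-(ε / m)))⁻¹) *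
        (A ^ (lev K : ℝ) * ∏ j, U j K ^ (1 / (m : ℝ))) := by
  classical
  have hA0 : A ≠ 0 := (zero_lt_one.trans hA1).ne'
  have hm' : (m : ℝ) ≠ 0 := by positivity
  have hp : (0 : ℝ) ≤ 1 / (m : ℝ) := by positivity
  set Y := A ^ (lev K : ℝ) * ∏ j, U j K ^ (1 / (m : ℝ)) with hY
  set c := (C1 * 2 ^ r * C2 * A) ^ (1 / (m : ℝ)) with hc
  have hs : ∀ s : ℕ, ∑ J ∈ H with lev J = lev K + s, A ^ (lev J : ℝ) * ∏ j, U j J ^ (1 / (m : ℝ)) ≤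
      c * (A ^ (-(ε / m))) ^ s * Y := by
    intro s
    have h := pack_level hm r hr A hA0 hAt (H.filter fun J => lev J = lev K + s)
      ((lev K + s : ℤ) : ℝ) (lev K : ℝ) l vol w U x C1 (C2 * A ^ (-(ε * s))) K j0
      (fun J hJ => hx J (Finset.mem_filter.1 hJ).1) (hwH s) (hUH s)
      (fun J hJ => by
        have := hw1 J (Finset.mem_filter.1 hJ).1
        rwa [(Finset.mem_filter.1 hJ).2] at this) hw2 hU1 hU2
    have e1 : (C1 * 2 ^ r * (C2 * A ^ (-(ε * s))) * A) ^ (1 / (m : ℝ)) = c * (A ^ (-(ε / m))) ^ s := by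
      rw [hc, ← ENNReal.rpow_natCast, ← ENNReal.rpow_mul,
        show C1 * 2 ^ r * (C2 * A ^ (-(ε * s))) * A = (C1 * 2 ^ r * C2 * A) * A ^ (-(ε * s)) by ring,
        ENNReal.mul_rpow_of_nonneg _ _ hp, ← ENNReal.rpow_mul]
      congr 2; field_simp
    rw [e1] at h
    refine le_trans (le_of_eq ?_) h
    refine Finset.sum_congr rfl fun J hJ => ?_
    rw [(Finset.mem_filter.1 hJ).2]
  let φ : ι → ℕ := fun J => (lev J - lev K).toNat
  have hφ : ∀ J ∈ H, ∀ s : ℕ, φ J = s ↔ lev J = lev K + s := by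
    intro J hJ s
    have := hlev J hJ
    simp only [φ]; lia
  rw [← Finset.sum_fiberwise_of_maps_to (t := H.image φ) (g := φ)
    (fun J hJ => Finset.mem_image_of_mem φ hJ)]
  calc _ ≤ ∑ s ∈ H.image φ, c * (A ^ (-(ε / m))) ^ s * Y := by
        refine Finset.sum_le_sum fun s _ => ?_
        rw [Finset.filter_congr (fun J hJ => hφ J hJ s)]
        exact hs s
    _ ≤ ∑' s : ℕ, c * (A ^ (-(ε / m))) ^ s * Y := ENNReal.sum_le_tsum _
    _ = _ := by rw [ENNReal.tsum_mul_right, ENNReal.tsum_mul_left, ENNReal.tsum_geometric]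




lemma sum_lintegral_le {X ι : Type*} [MeasurableSpace X] (μ : Measure X) (S : Finset ι)
    (g : ι → X → ℝ≥0∞) : ∑ K ∈ S, ∫⁻ x, g K x ∂μ ≤ ∫⁻ x, ∑ K ∈ S, g K x ∂μ := by
  classical
  induction S using Finset.induction_on with
  | empty => simp
  | insert a s ha ih =>
    simp_rw [Finset.sum_insert ha]
    refine le_trans ?_ (le_lintegral_add _ _)
    gcongr

lemma sum_disj_le {n : ℕ} {s : Fin n → ℝ} (w : ESp n → ℝ≥0∞) (H : Finset (DIx n)) (K : DIx n)
    (hH : ∀ J ∈ H, dle s J K)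
    (hd : ∀ J ∈ H, ∀ J' ∈ H, J ≠ J' → Disjoint (dq s J) (dq s J')) :
    ∑ J ∈ H, ∫⁻ y in dq s J, w y ≤ ∫⁻ y in dq s K, w y := by
  rw [← lintegral_biUnion_finset (fun J hJ J' hJ' h => hd J hJ J' hJ' h) (fun J _ => meas_dq s J)]
  refine lintegral_mono_set ?_
  exact iUnion₂_subset fun J hJ => (hH J hJ).2

lemma stop_sum {n : ℕ} {s : Fin n → ℝ} (u f : ESp n → ℝ≥0∞) (S : Finset (DIx n))
    (hS : ∀ K ∈ S, ∀ K' ∈ S, dle s K' K → K' ≠ K →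
      2 * essInf u (volume.restrict (dq s K)) ≤ essInf u (volume.restrict (dq s K'))) :
    ∑ K ∈ S, essInf u (volume.restrict (dq s K)) * ∫⁻ y in dq s K, f y ≤
      2 * ∫⁻ y, f y * u y := by
  classical
  set X : DIx n → ℝ≥0∞ := fun K => essInf u (volume.restrict (dq s K)) with hX
  have hae : ∀ᵐ x ∂(volume : Measure (ESp n)), ∀ K : DIx n, x ∈ dq s K → X K ≤ u x := by
    rw [ae_all_iff]
    intro K
    have := ae_essInf_le (f := u) (μ := volume.restrict (dq s K))
    rwa [ae_restrict_iff' (meas_dq s K)] at this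
  calc ∑ K ∈ S, X K * ∫⁻ y in dq s K, f y
      ≤ ∑ K ∈ S, ∫⁻ y, X K * (dq s K).indicator f y := by
        refine Finset.sum_le_sum fun K _ => ?_
        rw [← lintegral_indicator (meas_dq s K)]
        exact lintegral_const_mul_le _ _
    _ ≤ ∫⁻ y, ∑ K ∈ S, X K * (dq s K).indicator f y := sum_lintegral_le _ _ _
    _ ≤ ∫⁻ y, 2 * (f y * u y) := by
        refine lintegral_mono_ae ?_
        filter_upwards [hae] with x hx
        have e : ∑ K ∈ S, X K * (dq s K).indicator f x = f x * ∑ K ∈ S with x ∈ dq s K, X K := by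
          rw [Finset.sum_filter, Finset.mul_sum]
          refine Finset.sum_congr rfl fun K _ => ?_
          by_cases h : x ∈ dq s K <;> simp [h, mul_comm]
        rw [e, mul_left_comm]
        gcongr
        refine chain_sum X _ _ (fun K hK => hx K (Finset.mem_filter.1 hK).2) ?_
        intro K hK K' hK' hne
        rw [Finset.mem_filter] at hK hK'
        rcases dle_total hK.2 hK'.2 with h | h
        · right; exact hS K' hK'.1 K hK.1 h hne
        · left; exact hS K hK.1 K' hK'.1 h hne.symm
    _ = _ := lintegral_const_mul' _ _ (by simp)

lemma vol_prod {m : ℕ} (hm : 0 < m) (q : ℝ) (C t : ℝ≥0∞) (x : Fin m → ℝ≥0∞) :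
    ∏ j, (C * x j ^ (m * q) * t) ^ (1 / (m : ℝ)) = C * (∏ j, x j ^ q) * t := by
  have hm' : (m : ℝ) ≠ 0 := by positivity
  have hp : (0 : ℝ) ≤ 1 / (m : ℝ) := by positivity
  simp_rw [ENNReal.mul_rpow_of_nonneg _ _ hp]
  have e : ∀ y : ℝ≥0∞, ∏ _j : Fin m, y ^ (1 / (m : ℝ)) = y := by
    intro y
    rw [Finset.prod_const, ← ENNReal.rpow_natCast, ← ENNReal.rpow_mul]
    simp [hm']
  rw [Finset.prod_mul_distrib, Finset.prod_mul_distrib, e, e]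
  congr 2
  refine Finset.prod_congr rfl fun j _ => ?_
  rw [← ENNReal.rpow_mul]; congr 1; field_simp

/-- the constant for one class -/
def KC (n m : ℕ) (q : ℝ) (C1 CW : ℝ≥0∞) (ε : ℝ) : ℝ≥0∞ :=
  m * ((C1 * 2 ^ (m * q) * (CW * ((2 : ℝ≥0∞) ^ n) ^ ε) * 2 ^ n) ^ (1 / (m : ℝ)) *
    (1 - ((2 : ℝ≥0∞) ^ n) ^ (-(ε / m)))⁻¹) * (C1 * ∏ _j : Fin m, 2 ^ q)

lemma class_sum {n m : ℕ} (hn : 0 < n) (hm : 0 < m) (q : ℝ) (hq0 : 0 < q) (hq : 1 ≤ m * q)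
    (s : Fin n → ℝ) (u f : Fin m → ESp n → ℝ≥0∞) (W : ESp n → ℝ≥0∞) (C1 CW : ℝ≥0∞) (ε : ℝ)
    (hε : 0 < ε) (hPW : PWw W CW ε)
    (hU1 : ∀ j J, ∫⁻ y in dq s J, u j y ^ (m * q) ≤
      C1 * essInf (u j) (volume.restrict (dq s J)) ^ (m * q) * volume (dq s J))
    (a : DIx n → ℝ≥0∞) (ha : ∀ J, a J = ∏ j, (∫⁻ y in dq s J, f j y) ^ q)
    (lev : DIx n → ℤ) (l : ℝ) (G : Finset (DIx n))
    (hG : ∀ J ∈ G, CZ s a (((2 : ℝ≥0∞) ^ n) ^ (lev J : ℝ)) J)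
    (hw1 : ∀ J ∈ G, ((2 : ℝ≥0∞) ^ n) ^ (m * (lev J : ℝ) + l) * volume (dq s J)
      ≤ ∫⁻ y in dq s J, W y)
    (hw2 : ∀ J ∈ G, ∫⁻ y in dq s J, W y ≤
      ((2 : ℝ≥0∞) ^ n) ^ (m * (lev J : ℝ) + l + 1) * volume (dq s J)) :
    ∑ J ∈ G, ((2 : ℝ≥0∞) ^ n) ^ (lev J : ℝ) *
        ∏ j, (∫⁻ y in dq s J, u j y ^ (m * q)) ^ (1 / (m : ℝ)) ≤
      KC n m q C1 CW ε * ∏ j, (∫⁻ y, f j y * u j y) ^ q := by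
  classical
  set A : ℝ≥0∞ := (2 : ℝ≥0∞) ^ n with hA
  have hA1 : 1 < A := by
    rw [hA]; exact one_lt_pow₀ (by norm_num) hn.ne'
  have hAt : A ≠ ⊤ := by rw [hA]; exact ENNReal.pow_ne_top (by simp)
  have hA0 : A ≠ 0 := (zero_lt_one.trans hA1).ne'
  have hr : (0 : ℝ) < m * q := by linarith
  set x : Fin m → DIx n → ℝ≥0∞ := fun j J => essInf (u j) (volume.restrict (dq s J)) with hx
  set U : Fin m → DIx n → ℝ≥0∞ := fun j J => ∫⁻ y in dq s J, u j y ^ (m * q) with hU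
  set w : DIx n → ℝ≥0∞ := fun J => ∫⁻ y in dq s J, W y with hw
  have hU2 : ∀ j J, x j J ^ (m * q) * volume (dq s J) ≤ U j J := by
    intro j J
    rw [hU, ← setLIntegral_const]
    refine lintegral_mono_ae ?_
    filter_upwards [ae_essInf_le (f := u j) (μ := volume.restrict (dq s J))] with y hy
    exact ENNReal.rpow_le_rpow hy hr.le
  have hmono : ∀ J K, dle s J K → a J ≤ a K := by
    intro J K h
    rw [ha, ha]
    refine Finset.prod_le_prod' fun j _ => ?_
    exact ENNReal.rpow_le_rpow (lintegral_mono_set h.2) hq0.le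
  have hlev : ∀ J ∈ G, ∀ K ∈ G, dle s J K → lev K ≤ lev J := by
    intro J hJ K hK h
    by_contra hc
    push Not at hc
    have hne : K ≠ J := by rintro rfl; exact lt_irrefl _ hc
    have h1 := (hG J hJ).2 K h hne
    have h2 := (hG K hK).1
    refine absurd (h2.trans_le h1) (not_lt.2 ?_)
    gcongr ?_ * _
    exact ENNReal.rpow_le_rpow_of_exponent_le hA1.le (by exact_mod_cast hc.le)
  obtain ⟨S, hSG, hcov, hst⟩ := sel_exists hm (dle s) (dle_refl s) (fun J : DIx n => J.1)
    (fun J K h hne => dle_lt h hne) x G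
  set Y : DIx n → ℝ≥0∞ := fun J => A ^ (lev J : ℝ) * ∏ j, U j J ^ (1 / (m : ℝ)) with hY
  set P : ℝ≥0∞ := ((C1 * 2 ^ (m * q) * (CW * A ^ ε) * A) ^ (1 / (m : ℝ)) *
    (1 - A ^ (-(ε / m)))⁻¹) with hP
  have hpack : ∀ K ∈ S, ∀ j0 : Fin m,
      ∑ J ∈ G with (dle s J K ∧ x j0 J ≤ 2 * x j0 K), Y J ≤ P * Y K := by
    intro K hK j0
    set H := G.filter (fun J => dle s J K ∧ x j0 J ≤ 2 * x j0 K) with hH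
    have hHm : ∀ J ∈ H, J ∈ G ∧ dle s J K ∧ x j0 J ≤ 2 * x j0 K := fun J hJ => by
      simpa [hH] using hJ
    have hdisj : ∀ t : ℕ, ∀ J ∈ H.filter (fun J => lev J = lev K + t),
        ∀ J' ∈ H.filter (fun J => lev J = lev K + t), J ≠ J' → Disjoint (dq s J) (dq s J') := by
      intro t J hJ J' hJ' hne
      rw [Finset.mem_filter] at hJ hJ'
      have h1 := hG J (hHm J hJ.1).1
      have h2 := hG J' (hHm J' hJ'.1).1
      rw [hJ.2] at h1
      rw [hJ'.2] at h2
      exact CZ_disj h1 h2 hne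
    refine packing hm (m * q) hr A hA1 hAt H lev l (fun J => volume (dq s J)) w U x C1 (CW * A ^ ε) ε
      K j0 (fun J hJ => (hHm J hJ).2.2) (fun J hJ => hlev J (hHm J hJ).1 K (hSG hK) (hHm J hJ).2.1)
      ?_ ?_ (fun J hJ => hw1 J (hHm J hJ).1) (hw2 K (hSG hK)) hU1 hU2
    · intro t
      set Ht := H.filter (fun J => lev J = lev K + t) with hHt
      have hvol : ∑ J ∈ Ht, volume (dq s J) ≤ A ^ (1 - (t : ℝ)) * volume (dq s K) := by
        have h1 : A ^ ((lev K : ℝ) + t) * ∑ J ∈ Ht, volume (dq s J) ≤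
            A * A ^ (lev K : ℝ) * volume (dq s K) := by
          calc _ = ∑ J ∈ Ht, A ^ ((lev K : ℝ) + t) * volume (dq s J) := by rw [Finset.mul_sum]
            _ ≤ ∑ J ∈ Ht, a J := by
                refine Finset.sum_le_sum fun J hJ => ?_
                rw [Finset.mem_filter] at hJ
                have := (hG J (hHm J hJ.1).1).1.le
                rw [hJ.2] at this
                push_cast at this
                exact this
            _ ≤ a K := by
                simp_rw [ha]
                refine (super_add Ht hm q hq (fun j J => ∫⁻ y in dq s J, f j y)).trans ?_
                refine Finset.prod_le_prod' fun j _ => ?_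
                refine ENNReal.rpow_le_rpow ?_ hq0.le
                exact sum_disj_le (f j) Ht K
                  (fun J hJ => (hHm J (Finset.mem_filter.1 hJ).1).2.1) (hdisj t)
            _ ≤ _ := CZ_upper hmono (hG K (hSG hK))
        have h2 : ∑ J ∈ Ht, volume (dq s J) = A ^ (-((lev K : ℝ) + t)) *
            (A ^ ((lev K : ℝ) + t) * ∑ J ∈ Ht, volume (dq s J)) := by
          rw [← mul_assoc, ← ENNReal.rpow_add _ _ hA0 hAt]; simp
        rw [h2]
        refine (mul_le_mul' le_rfl h1).trans (le_of_eq ?_)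
        rw [← mul_assoc, ← mul_assoc]
        congr 1
        have h3 : A = A ^ (1 : ℝ) := by simp
        rw [mul_assoc, mul_left_comm, ← ENNReal.rpow_add _ _ hA0 hAt]
        conv_lhs => rw [h3, ← ENNReal.rpow_mul, ← ENNReal.rpow_add _ _ hA0 hAt]
        congr 1; ring
      have h4 := hPW s K (⋃ J ∈ Ht, dq s J) (Finset.measurableSet_biUnion _ fun J _ => meas_dq s J)
        (iUnion₂_subset fun J hJ => (hHm J (Finset.mem_filter.1 hJ).1).2.1.2)
        (A ^ (1 - (t : ℝ))) ((measure_biUnion_finset_le _ _).trans hvol)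
      rw [lintegral_biUnion_finset (fun J hJ J' hJ' h => hdisj t J hJ J' hJ' h)
        (fun J _ => meas_dq s J)] at h4
      refine h4.trans (le_of_eq ?_)
      rw [← ENNReal.rpow_mul, mul_assoc CW (A ^ ε), ← ENNReal.rpow_add _ _ hA0 hAt]
      congr 3; ring
    · intro t j
      exact sum_disj_le _ _ K
        (fun J hJ => (hHm J (Finset.mem_filter.1 hJ).1).2.1) (hdisj t)
  have h1 : ∑ J ∈ G, Y J ≤ ∑ K ∈ S, ∑ j0 : Fin m, P * Y K := by
    calc ∑ J ∈ G, Y J ≤ ∑ J ∈ G, ∑ K ∈ S, ∑ j0 : Fin m,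
          (if dle s J K ∧ x j0 J ≤ 2 * x j0 K then Y J else 0) := by
          refine Finset.sum_le_sum fun J hJ => ?_
          obtain ⟨K, hK, hle, j, hj⟩ := hcov J hJ
          calc Y J = (if dle s J K ∧ x j J ≤ 2 * x j K then Y J else 0) := by rw [if_pos ⟨hle, hj⟩]
            _ ≤ ∑ j0 : Fin m, (if dle s J K ∧ x j0 J ≤ 2 * x j0 K then Y J else 0) :=
                Finset.single_le_sum
                  (f := fun j0 : Fin m => (if dle s J K ∧ x j0 J ≤ 2 * x j0 K then Y J else 0))
                  (fun _ _ => zero_le) (Finset.mem_univ j)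
            _ ≤ _ := Finset.single_le_sum
                  (f := fun K => ∑ j0 : Fin m,
                    (if dle s J K ∧ x j0 J ≤ 2 * x j0 K then Y J else 0))
                  (fun _ _ => zero_le) hK
      _ = ∑ K ∈ S, ∑ j0 : Fin m, ∑ J ∈ G with (dle s J K ∧ x j0 J ≤ 2 * x j0 K), Y J := by
          rw [Finset.sum_comm]
          refine Finset.sum_congr rfl fun K _ => ?_
          rw [Finset.sum_comm]
          refine Finset.sum_congr rfl fun j _ => ?_
          rw [Finset.sum_filter]
      _ ≤ _ := Finset.sum_le_sum fun K hK => Finset.sum_le_sum fun j _ => hpack K hK j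
  have h2 : ∀ K ∈ S, Y K ≤ C1 * ∏ j, (x j K * ∫⁻ y in dq s K, f j y) ^ q := by
    intro K hK
    calc Y K ≤ A ^ (lev K : ℝ) * ∏ j, (C1 * x j K ^ (m * q) * volume (dq s K)) ^ (1 / (m : ℝ)) := by
          refine mul_le_mul' le_rfl (Finset.prod_le_prod' fun j _ => ?_)
          exact ENNReal.rpow_le_rpow (hU1 j K) (by positivity)
      _ = C1 * (∏ j, x j K ^ q) * (A ^ (lev K : ℝ) * volume (dq s K)) := by
          rw [vol_prod hm]; ring
      _ ≤ C1 * (∏ j, x j K ^ q) * a K := mul_le_mul' le_rfl (hG K (hSG hK)).1.le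
      _ = _ := by
          rw [ha, mul_assoc, ← Finset.prod_mul_distrib]
          congr 1
          refine Finset.prod_congr rfl fun j _ => ?_
          rw [ENNReal.mul_rpow_of_nonneg _ _ hq0.le]
  calc ∑ J ∈ G, Y J ≤ ∑ K ∈ S, ∑ j0 : Fin m, P * Y K := h1
    _ = m * P * ∑ K ∈ S, Y K := by
        rw [Finset.mul_sum]
        refine Finset.sum_congr rfl fun K _ => ?_
        simp [mul_assoc]
    _ ≤ m * P * ∑ K ∈ S, C1 * ∏ j, (x j K * ∫⁻ y in dq s K, f j y) ^ q := by
        gcongr with K hK; exact h2 K hK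
    _ = m * P * (C1 * ∑ K ∈ S, ∏ j, (x j K * ∫⁻ y in dq s K, f j y) ^ q) := by
        congr 1; rw [Finset.mul_sum]
    _ ≤ m * P * (C1 * ∏ j, (2 * ∫⁻ y, f j y * u j y) ^ q) := by
        refine mul_le_mul' le_rfl (mul_le_mul' le_rfl ?_)
        refine (super_add S hm q hq (fun j K => x j K * ∫⁻ y in dq s K, f j y)).trans ?_
        refine Finset.prod_le_prod' fun j _ => ?_
        refine ENNReal.rpow_le_rpow ?_ hq0.le
        exact stop_sum (u j) (f j) S (fun K hK K' hK' h hne => hst K hK K' hK' h hne j)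
    _ = _ := by
        simp_rw [ENNReal.mul_rpow_of_nonneg _ _ hq0.le]
        rw [Finset.prod_mul_distrib, KC, hP]
        ring




lemma KC_ne_top {n m : ℕ} (hn : 0 < n) (hm : 0 < m) (q : ℝ) (hq0 : 0 < q) (C1 CW : ℝ≥0∞)
    (h1 : C1 ≠ ⊤) (h2 : CW ≠ ⊤) (ε : ℝ) (hε : 0 < ε) : KC n m q C1 CW ε ≠ ⊤ := by
  have hA1 : (1 : ℝ≥0∞) < 2 ^ n := one_lt_pow₀ (by norm_num) hn.ne'
  have hAt : (2 : ℝ≥0∞) ^ n ≠ ⊤ := ENNReal.pow_ne_top (by simp)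
  have hm' : (0 : ℝ) < m := by positivity
  have hlt : ((2 : ℝ≥0∞) ^ n) ^ (-(ε / m)) < 1 := by
    apply ENNReal.rpow_lt_one_of_one_lt_of_neg hA1
    have : 0 < ε / m := by positivity
    linarith
  unfold KC
  have e1 : (C1 * 2 ^ (m * q) * (CW * ((2 : ℝ≥0∞) ^ n) ^ ε) * 2 ^ n) ^ (1 / (m : ℝ)) ≠ ⊤ := by
    refine ENNReal.rpow_ne_top_of_nonneg (by positivity) ?_
    refine ENNReal.mul_ne_top (ENNReal.mul_ne_top (ENNReal.mul_ne_top h1 ?_)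
      (ENNReal.mul_ne_top h2 ?_)) hAt
    · exact ENNReal.rpow_ne_top_of_nonneg (by positivity) (by simp)
    · exact ENNReal.rpow_ne_top_of_nonneg hε.le hAt
  have e2 : (1 - ((2 : ℝ≥0∞) ^ n) ^ (-(ε / m)))⁻¹ ≠ ⊤ := by
    rw [ENNReal.inv_ne_top]; exact (tsub_pos_of_lt hlt).ne'
  refine ENNReal.mul_ne_top (ENNReal.mul_ne_top (by simp) (ENNReal.mul_ne_top e1 e2))
    (ENNReal.mul_ne_top h1 ?_)
  exact ENNReal.prod_ne_top fun j _ => ENNReal.rpow_ne_top_of_nonneg hq0.le (by simp)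

lemma prod_rpow_exp {ι : Type*} (S : Finset ι) (κ : ℝ≥0∞) (δ : ι → ℝ) (h : ∀ j, 0 ≤ δ j) :
    ∏ j ∈ S, κ ^ δ j = κ ^ (∑ j ∈ S, δ j) := by
  classical
  induction S using Finset.induction_on with
  | empty => simp
  | insert a s ha ih =>
    rw [Finset.prod_insert ha, Finset.sum_insert ha, ih,
      ENNReal.rpow_add_of_nonneg _ _ (h a) (Finset.sum_nonneg fun j _ => h j)]

lemma sum_int_le (c : ℝ≥0∞) (hc : c < 1) (T : Finset ℤ) :
    ∑ l ∈ T, c ^ l.natAbs ≤ 2 * (1 - c)⁻¹ := by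
  have h := HasSum.of_nat_of_neg_add_one (f := fun l : ℤ => c ^ l.natAbs)
    ENNReal.summable.hasSum ENNReal.summable.hasSum
  refine (ENNReal.sum_le_tsum T).trans ?_
  rw [h.tsum_eq, two_mul]
  gcongr
  · simp [ENNReal.tsum_geometric]
  · rw [← ENNReal.tsum_geometric]
    refine ENNReal.tsum_le_tsum fun k => ?_
    have : (-((k : ℤ) + 1)).natAbs = k + 1 := by lia
    rw [this, pow_succ]
    exact mul_le_of_le_one_right' hc.le

/-- density of the level set in its cube -/
lemma dens {n m : ℕ} (hn : 0 < n) (s : Fin n → ℝ) (V : ESp n → ℝ≥0∞) (hV : Measurable V)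
    (CS : ℝ≥0∞) (θ : ℝ) (hθ : 0 < θ) (hSL : SLw (fun x => V x ^ m) CS θ) (J : DIx n) (k l : ℤ)
    (hw1 : ((2 : ℝ≥0∞) ^ n) ^ (m * (k : ℝ) + l) * volume (dq s J) ≤ ∫⁻ y in dq s J, V y ^ m)
    (hw2 : ∫⁻ y in dq s J, V y ^ m ≤ ((2 : ℝ≥0∞) ^ n) ^ (m * (k : ℝ) + l + 1) * volume (dq s J)) :
    volume (dq s J ∩ V ⁻¹' Ioc (((2 : ℝ≥0∞) ^ n) ^ (k : ℝ)) (((2 : ℝ≥0∞) ^ n) ^ ((k : ℝ) + 1))) ≤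
      ((2 ^ n + CS * ((2 : ℝ≥0∞) ^ n) ^ (m * θ)) * (((2 : ℝ≥0∞) ^ n) ^ (-(min 1 θ))) ^ l.natAbs) *
        volume (dq s J) := by
  set A : ℝ≥0∞ := (2 : ℝ≥0∞) ^ n with hA
  have hA1 : 1 < A := by
    rw [hA]; exact one_lt_pow₀ (by norm_num) hn.ne'
  have hAt : A ≠ ⊤ := by rw [hA]; exact ENNReal.pow_ne_top (by simp)
  have hA0 : A ≠ 0 := (zero_lt_one.trans hA1).ne'
  have epow : ∀ z : ℝ, (A ^ z) ^ m = A ^ (m * z) := by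
    intro z; rw [← ENNReal.rpow_natCast, ← ENNReal.rpow_mul, mul_comm]
  have eabs : (A ^ (-(min 1 θ))) ^ l.natAbs = A ^ (-(min 1 θ) * (l.natAbs : ℝ)) := by
    rw [← ENNReal.rpow_natCast, ← ENNReal.rpow_mul]
  rw [eabs]
  rcases lt_or_ge l 0 with hl | hl
  · have hcast : (l.natAbs : ℝ) = -(l : ℝ) := by
      have : ((l.natAbs : ℤ) : ℝ) = ((-l : ℤ) : ℝ) := by congr 1; lia
      simpa using this
    have hl' : (l : ℝ) < 0 := by exact_mod_cast hl
    set E := dq s J ∩ V ⁻¹' Ioc (A ^ (k : ℝ)) (A ^ ((k : ℝ) + 1)) with hE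
    have hEm : MeasurableSet E := (meas_dq s J).inter (hV measurableSet_Ioc)
    have h1 : A ^ (m * (k : ℝ)) * volume E ≤ ∫⁻ y in dq s J, V y ^ m := by
      rw [← setLIntegral_const]
      refine (setLIntegral_mono' hEm fun x hx => ?_).trans (lintegral_mono_set inter_subset_left)
      rw [← epow]
      exact pow_le_pow_left' hx.2.1.le m
    have h2 : volume E = A ^ (-(m * (k : ℝ))) * (A ^ (m * (k : ℝ)) * volume E) := by
      rw [← mul_assoc, ← ENNReal.rpow_add _ _ hA0 hAt]; simp
    rw [h2]
    calc _ ≤ A ^ (-(m * (k : ℝ))) * (A ^ (m * (k : ℝ) + l + 1) * volume (dq s J)) := by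
          refine mul_le_mul' le_rfl (h1.trans hw2)
      _ = A ^ (1 + (l : ℝ)) * volume (dq s J) := by
          rw [← mul_assoc, ← ENNReal.rpow_add _ _ hA0 hAt]; congr 2; ring
      _ ≤ (A * A ^ (-(min 1 θ) * (l.natAbs : ℝ))) * volume (dq s J) := by
          gcongr ?_ * _
          conv_rhs => rw [← ENNReal.rpow_one A, ← ENNReal.rpow_mul, ← ENNReal.rpow_add _ _ hA0 hAt]
          refine ENNReal.rpow_le_rpow_of_exponent_le hA1.le ?_
          rw [hcast]
          nlinarith [min_le_left 1 θ]
      _ ≤ _ := by gcongr; exact le_self_add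
  · have hcast : (l.natAbs : ℝ) = (l : ℝ) := by
      have : ((l.natAbs : ℤ) : ℝ) = ((l : ℤ) : ℝ) := by congr 1; lia
      simpa using this
    have hl' : (0 : ℝ) ≤ l := by exact_mod_cast hl
    refine (measure_mono ?_).trans ((hSL s J (A ^ ((m : ℝ) - l))).trans ?_)
    · intro x hx
      refine ⟨hx.1, ?_⟩
      have h3 : V x ^ m ≤ A ^ (m * ((k : ℝ) + 1)) := by
        rw [← epow]; exact pow_le_pow_left' hx.2.2 m
      change V x ^ m * volume (dq s J) ≤ A ^ ((m : ℝ) - l) * ∫⁻ y in dq s J, V y ^ m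
      calc V x ^ m * volume (dq s J) ≤ A ^ (m * ((k : ℝ) + 1)) * volume (dq s J) := by gcongr
        _ = A ^ ((m : ℝ) - l) * (A ^ (m * (k : ℝ) + l) * volume (dq s J)) := by
            rw [← mul_assoc, ← ENNReal.rpow_add _ _ hA0 hAt]; congr 2; ring
        _ ≤ _ := by gcongr
    · gcongr ?_ * _
      calc CS * (A ^ ((m : ℝ) - l)) ^ θ = CS * A ^ (m * θ) * A ^ (-θ * (l : ℝ)) := by
            rw [mul_assoc, ← ENNReal.rpow_add _ _ hA0 hAt, ← ENNReal.rpow_mul]; congr 2; ring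
        _ ≤ CS * A ^ (m * θ) * A ^ (-(min 1 θ) * (l.natAbs : ℝ)) := by
            refine mul_le_mul' le_rfl ?_
            refine ENNReal.rpow_le_rpow_of_exponent_le hA1.le ?_
            rw [hcast]
            nlinarith [min_le_right 1 θ]
        _ ≤ _ := by gcongr; exact le_add_self

lemma T_bound {n m : ℕ} (hn : 0 < n) (hm : 0 < m) (q : ℝ)
    (s : Fin n → ℝ) (u : Fin m → ESp n → ℝ≥0∞) (hu : ∀ j, Measurable (u j))
    (CU : Fin m → ℝ≥0∞) (δ : Fin m → ℝ) (hδ : ∀ j, 0 < δ j)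
    (hPU : ∀ j, PWw (fun x => u j x ^ (m * q)) (CU j) (δ j))
    (V : ESp n → ℝ≥0∞) (J : DIx n) (E : Set (ESp n)) (hE : MeasurableSet E) (hEJ : E ⊆ dq s J)
    (κ b : ℝ≥0∞) (hκ : volume E ≤ κ * volume (dq s J)) (hb : b ≠ ⊤)
    (hVE : ∀ x ∈ E, V x ≤ b) :
    ∫⁻ x in E, (∏ j, u j x ^ q) * V x ≤
      (∏ j, CU j ^ (1 / (m : ℝ))) * κ ^ (∑ j, δ j * (1 / (m : ℝ))) *
        (b * ∏ j, (∫⁻ y in dq s J, u j y ^ (m * q)) ^ (1 / (m : ℝ))) := by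
  have hm' : (m : ℝ) ≠ 0 := by positivity
  have hp : (0 : ℝ) ≤ 1 / (m : ℝ) := by positivity
  have e : ∀ y : ℝ≥0∞, y ^ q = (y ^ (m * q)) ^ (1 / (m : ℝ)) := by
    intro y; rw [← ENNReal.rpow_mul]; congr 1; field_simp
  calc ∫⁻ x in E, (∏ j, u j x ^ q) * V x ≤ ∫⁻ x in E, b * ∏ j, (u j x ^ (m * q)) ^ (1 / (m : ℝ)) := by
        refine setLIntegral_mono' hE fun x hx => ?_
        simp_rw [← e]
        rw [mul_comm]
        gcongr
        exact hVE x hx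
    _ = b * ∫⁻ x in E, ∏ j, (u j x ^ (m * q)) ^ (1 / (m : ℝ)) := lintegral_const_mul' _ _ hb
    _ ≤ b * ∏ j, (∫⁻ x in E, u j x ^ (m * q)) ^ (1 / (m : ℝ)) := by
        refine mul_le_mul' le_rfl ?_
        exact ENNReal.lintegral_prod_norm_pow_le (μ := volume.restrict E) Finset.univ
          (f := fun (j : Fin m) x => u j x ^ (m * q))
          (fun j _ => ((hu j).pow_const _).aemeasurable)
          (p := fun _ => 1 / (m : ℝ)) (by simp; field_simp) (fun i _ => hp)
    _ ≤ b * ∏ j, (CU j * κ ^ δ j * ∫⁻ y in dq s J, u j y ^ (m * q)) ^ (1 / (m : ℝ)) := by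
        refine mul_le_mul' le_rfl (Finset.prod_le_prod' fun j _ => ?_)
        exact ENNReal.rpow_le_rpow (hPU j s J E hE hEJ κ hκ) hp
    _ = _ := by
        simp_rw [ENNReal.mul_rpow_of_nonneg _ _ hp, ← ENNReal.rpow_mul]
        rw [Finset.prod_mul_distrib, Finset.prod_mul_distrib,
          prod_rpow_exp _ κ (fun j => δ j * (1 / (m : ℝ))) (fun j => mul_nonneg (hδ j).le hp)]
        ring

lemma core {n m : ℕ} (hn : 0 < n) (hm : 0 < m) (q : ℝ) (hq0 : 0 < q) (hq : 1 ≤ m * q)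
    (u : Fin m → ESp n → ℝ≥0∞) (hu : ∀ j, Measurable (u j))
    (CU : Fin m → ℝ≥0∞) (hCU : ∀ j, CU j ≠ ⊤) (δ : Fin m → ℝ) (hδ : ∀ j, 0 < δ j)
    (hPU : ∀ j, PWw (fun x => u j x ^ (m * q)) (CU j) (δ j))
    (C1 : ℝ≥0∞) (hC1 : C1 ≠ ⊤)
    (hU1 : ∀ s j J, ∫⁻ y in dq s J, u j y ^ (m * q) ≤
      C1 * essInf (u j) (volume.restrict (dq s J)) ^ (m * q) * volume (dq s J))
    (CS CW : ℝ≥0∞) (hCS : CS ≠ ⊤) (hCW : CW ≠ ⊤) (θ ε : ℝ) (hθ : 0 < θ) (hε : 0 < ε) :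
    ∃ K : ℝ≥0∞, K ≠ ⊤ ∧ ∀ (s : Fin n → ℝ) (V : ESp n → ℝ≥0∞) (f : Fin m → ESp n → ℝ≥0∞),
      Measurable V → (∀ᵐ x ∂(volume : Measure (ESp n)), V x ≠ 0) → (∀ x, V x ≠ ⊤) →
      SLw (fun x => V x ^ m) CS θ → PWw (fun x => V x ^ m) CW ε →
      (∀ J, ∫⁻ y in dq s J, V y ^ m ≠ ⊤) → (∀ j, ∫⁻ y, f j y ≠ ⊤) →
      ∫⁻ x in {x | ∃ J, x ∈ dq s J ∧ V x * volume (dq s J) < ∏ j, (∫⁻ y in dq s J, f j y) ^ q},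
        (∏ j, u j x ^ q) * V x ≤ K * ∏ j, (∫⁻ y, f j y * u j y) ^ q := by
  classical
  set A : ℝ≥0∞ := (2 : ℝ≥0∞) ^ n with hA
  have hA1 : 1 < A := by
    rw [hA]; exact one_lt_pow₀ (by norm_num) hn.ne'
  have hAt : A ≠ ⊤ := by rw [hA]; exact ENNReal.pow_ne_top (by simp)
  have hA0 : A ≠ 0 := (zero_lt_one.trans hA1).ne'
  have hm' : (0 : ℝ) < m := by positivity
  have hp : (0 : ℝ) < 1 / (m : ℝ) := by positivity
  set d : ℝ := ∑ j, δ j * (1 / (m : ℝ)) with hd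
  have hd0 : 0 < d := by
    have : Nonempty (Fin m) := ⟨⟨0, hm⟩⟩
    exact Finset.sum_pos (fun j _ => mul_pos (hδ j) hp) Finset.univ_nonempty
  set D : ℝ≥0∞ := A + CS * A ^ (m * θ) with hD
  have hDt : D ≠ ⊤ := ENNReal.add_ne_top.2 ⟨hAt, ENNReal.mul_ne_top hCS
    (ENNReal.rpow_ne_top_of_nonneg (by positivity) hAt)⟩
  set η : ℝ := min 1 θ with hη
  have hη0 : 0 < η := lt_min one_pos hθ
  set c : ℝ≥0∞ := (A ^ (-η)) ^ d with hc
  have hc1 : c < 1 := by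
    rw [hc, ← ENNReal.rpow_mul]
    apply ENNReal.rpow_lt_one_of_one_lt_of_neg hA1
    nlinarith [mul_pos hη0 hd0]
  set P : ℝ≥0∞ := (∏ j, CU j ^ (1 / (m : ℝ))) * D ^ d * A with hP
  have hPt : P ≠ ⊤ := by
    refine ENNReal.mul_ne_top (ENNReal.mul_ne_top ?_ ?_) hAt
    · exact ENNReal.prod_ne_top fun j _ => ENNReal.rpow_ne_top_of_nonneg hp.le (hCU j)
    · exact ENNReal.rpow_ne_top_of_nonneg hd0.le hDt
  refine ⟨P * (2 * (1 - c)⁻¹) * KC n m q C1 CW ε, ?_, ?_⟩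
  · refine ENNReal.mul_ne_top (ENNReal.mul_ne_top hPt (ENNReal.mul_ne_top (by simp) ?_))
      (KC_ne_top hn hm q hq0 C1 CW hC1 hCW ε hε)
    rw [ENNReal.inv_ne_top]; exact (tsub_pos_of_lt hc1).ne'
  intro s V f hV hV0 hVt hSL hPW hWfin hf
  set a : DIx n → ℝ≥0∞ := fun J => ∏ j, (∫⁻ y in dq s J, f j y) ^ q with ha
  have hmono : ∀ J K, dle s J K → a J ≤ a K := by
    intro J K h
    refine Finset.prod_le_prod' fun j _ => ?_
    exact ENNReal.rpow_le_rpow (lintegral_mono_set h.2) hq0.le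
  have haM : ∀ J, a J ≤ ∏ j, (∫⁻ y, f j y) ^ q := by
    intro J
    refine Finset.prod_le_prod' fun j _ => ?_
    exact ENNReal.rpow_le_rpow (setLIntegral_le_lintegral _ _) hq0.le
  have hM : ∏ j, (∫⁻ y, f j y) ^ q ≠ ⊤ :=
    ENNReal.prod_ne_top fun j _ => ENNReal.rpow_ne_top_of_nonneg hq0.le (hf j)
  have huniq : ∀ J (k k' : ℤ), CZ s a (A ^ (k : ℝ)) J → CZ s a (A ^ (k' : ℝ)) J → k' ≤ k := by
    intro J k k' h h'
    by_contra hlt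
    push Not at hlt
    have h1 := CZ_upper hmono h
    refine absurd (h'.1.trans_le h1) (not_lt.2 ?_)
    gcongr ?_ * _
    conv_lhs => rw [← hA, ← ENNReal.rpow_one A, ← ENNReal.rpow_mul,
      ← ENNReal.rpow_add _ _ hA0 hAt]
    refine ENNReal.rpow_le_rpow_of_exponent_le hA1.le ?_
    have : ((k + 1 : ℤ) : ℝ) ≤ k' := by exact_mod_cast hlt
    push_cast at this; linarith
  have hlevex : ∀ J, ∃ k : ℤ, (∃ k' : ℤ, CZ s a (A ^ (k' : ℝ)) J) → CZ s a (A ^ (k : ℝ)) J := by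
    intro J
    by_cases h : ∃ k' : ℤ, CZ s a (A ^ (k' : ℝ)) J
    · obtain ⟨k, hk⟩ := h; exact ⟨k, fun _ => hk⟩
    · exact ⟨0, fun h' => absurd h' h⟩
  choose lev hlev using hlevex
  have hWpos : ∀ J, ∫⁻ y in dq s J, V y ^ m ≠ 0 := by
    intro J h
    rw [setLIntegral_eq_zero_iff (meas_dq s J) (hV.pow_const m)] at h
    apply vol_dq_ne_zero s J
    rw [← nonpos_iff_eq_zero]
    have : ∀ᵐ x ∂(volume : Measure (ESp n)), x ∉ dq s J := by
      filter_upwards [h, hV0] with x h1 h2 h3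
      exact h2 (pow_eq_zero_iff hm.ne' |>.1 (h1 h3))
    exact (measure_eq_zero_iff_ae_notMem.2 this).le
  have hclass : ∀ J, ∃ l : ℤ, A ^ (m * (lev J : ℝ) + l) * volume (dq s J) ≤ ∫⁻ y in dq s J, V y ^ m ∧
      ∫⁻ y in dq s J, V y ^ m ≤ A ^ (m * (lev J : ℝ) + l + 1) * volume (dq s J) := by
    intro J
    have hv0 := vol_dq_ne_zero s J
    have hvt := vol_dq_ne_top s J
    obtain ⟨l, hl1, hl2⟩ := ENNReal.exists_mem_Ico_zpow
      (x := (∫⁻ y in dq s J, V y ^ m) / volume (dq s J))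
      (ENNReal.div_ne_zero.2 ⟨hWpos J, hvt⟩) (ENNReal.div_ne_top (hWfin J) hv0) hA1 hAt
    refine ⟨l - m * lev J, ?_, ?_⟩
    · rw [ENNReal.le_div_iff_mul_le (Or.inl hv0) (Or.inl hvt)] at hl1
      convert hl1 using 2
      rw [← ENNReal.rpow_intCast]; congr 1; push_cast; ring
    · rw [ENNReal.div_lt_iff (Or.inl hv0) (Or.inl hvt)] at hl2
      refine hl2.le.trans (le_of_eq ?_)
      congr 1
      rw [← ENNReal.rpow_intCast]; congr 1; push_cast; ring
  choose cl hcl1 hcl2 using hclass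
  set Y : DIx n → ℝ≥0∞ := fun J => A ^ (lev J : ℝ) *
    ∏ j, (∫⁻ y in dq s J, u j y ^ (m * q)) ^ (1 / (m : ℝ)) with hY
  set sel : DIx n → Prop := fun J => CZ s a (A ^ (lev J : ℝ)) J with hsel
  set EE : DIx n → Set (ESp n) := fun J => if sel J then
    dq s J ∩ V ⁻¹' Ioc (A ^ (lev J : ℝ)) (A ^ ((lev J : ℝ) + 1)) else ∅ with hEE
  set Pi0 := ∏ j, (∫⁻ y, f j y * u j y) ^ q with hPi0
  have hsub : ({x | ∃ J, x ∈ dq s J ∧ V x * volume (dq s J) < a J} : Set (ESp n)) ⊆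
      {x | ¬ V x ≠ 0} ∪ ⋃ J, EE J := by
    rintro x ⟨J, hxJ, hJ⟩
    by_cases h0 : V x ≠ 0
    · right
      obtain ⟨k, hk⟩ := ENNReal.exists_mem_Ioc_zpow h0 (hVt x) hA1 hAt
      have hk1 : V x ∈ Ioc (A ^ (k : ℝ)) (A ^ ((k : ℝ) + 1)) := by
        have : ((k : ℝ) + 1) = ((k + 1 : ℤ) : ℝ) := by push_cast; ring
        rw [this, ENNReal.rpow_intCast, ENNReal.rpow_intCast]; exact hk
      have hlam : A ^ (k : ℝ) ≠ 0 := by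
        exact (ENNReal.rpow_pos hA0.bot_lt hAt).ne'
      obtain ⟨K, hK, hxK⟩ := CZ_exists hn haM hM hlam hxJ
        ((mul_le_mul' hk1.1.le le_rfl).trans_lt hJ)
      have hKl := hlev K ⟨k, hK⟩
      have hkl : lev K = k := le_antisymm (huniq K _ _ hK hKl) (huniq K _ _ hKl hK)
      refine mem_iUnion.2 ⟨K, ?_⟩
      simp only [hEE, hsel]
      rw [if_pos hKl, hkl]
      exact ⟨hxK, hk1⟩
    · left; exact h0
  have hT : ∀ J, sel J → ∫⁻ x in EE J, (∏ j, u j x ^ q) * V x ≤ P * c ^ (cl J).natAbs * Y J := by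
    intro J hJ
    have e1 : EE J = dq s J ∩ V ⁻¹' Ioc (A ^ (lev J : ℝ)) (A ^ ((lev J : ℝ) + 1)) := by
      simp only [hEE]; rw [if_pos hJ]
    rw [e1]
    have hκ := dens hn s V hV CS θ hθ hSL J (lev J) (cl J) (hcl1 J) (hcl2 J)
    refine (T_bound hn hm q s u hu CU δ hδ hPU V J _ ((meas_dq s J).inter (hV measurableSet_Ioc))
      inter_subset_left _ (A ^ ((lev J : ℝ) + 1)) hκ ?_ (fun x hx => hx.2.2)).trans (le_of_eq ?_)
    · exact ENNReal.rpow_ne_top_of_ne_zero hA0 hAt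
    · rw [ENNReal.mul_rpow_of_nonneg _ _ hd0.le, ENNReal.rpow_add _ _ hA0 hAt, ENNReal.rpow_one]
      have : ((A ^ (-η)) ^ (cl J).natAbs) ^ d = c ^ (cl J).natAbs := by
        rw [hc, ← ENNReal.rpow_natCast, ← ENNReal.rpow_natCast, ← ENNReal.rpow_mul,
          ← ENNReal.rpow_mul, ← ENNReal.rpow_mul, ← ENNReal.rpow_mul]
        congr 1; ring
      rw [this, hP, hY]
      ring
  have hnull : ∫⁻ x in {x | ¬ V x ≠ 0}, (∏ j, u j x ^ q) * V x = 0 :=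
    setLIntegral_measure_zero _ _ hV0
  refine (lintegral_mono_set hsub).trans ((lintegral_union_le _ _ _).trans ?_)
  rw [hnull, zero_add]
  refine (lintegral_iUnion_le _ _).trans ?_
  rw [ENNReal.tsum_eq_iSup_sum]
  refine iSup_le fun G => ?_
  calc ∑ J ∈ G, ∫⁻ x in EE J, (∏ j, u j x ^ q) * V x
      ≤ ∑ J ∈ G, if sel J then P * c ^ (cl J).natAbs * Y J else 0 := by
        refine Finset.sum_le_sum fun J _ => ?_
        by_cases hJ : sel J
        · rw [if_pos hJ]; exact hT J hJ
        · rw [if_neg hJ]; simp only [hEE]; rw [if_neg hJ]; simp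
    _ = ∑ J ∈ G with sel J, P * c ^ (cl J).natAbs * Y J := by rw [Finset.sum_filter]
    _ = ∑ l ∈ (G.filter sel).image cl, ∑ J ∈ G.filter sel with cl J = l,
          P * c ^ (cl J).natAbs * Y J :=
        (Finset.sum_fiberwise_of_maps_to (fun J hJ => Finset.mem_image_of_mem cl hJ) _).symm
    _ ≤ ∑ l ∈ (G.filter sel).image cl, c ^ l.natAbs * (P * (KC n m q C1 CW ε * Pi0)) := by
        refine Finset.sum_le_sum fun l _ => ?_
        calc _ = ∑ J ∈ G.filter sel with cl J = l, c ^ l.natAbs * P * Y J := by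
              refine Finset.sum_congr rfl fun J hJ => ?_
              rw [(Finset.mem_filter.1 hJ).2]; ring
          _ = c ^ l.natAbs * P * ∑ J ∈ G.filter sel with cl J = l, Y J := by rw [Finset.mul_sum]
          _ ≤ c ^ l.natAbs * P * (KC n m q C1 CW ε * Pi0) := by
              refine mul_le_mul' le_rfl ?_
              refine class_sum hn hm q hq0 hq s u f (fun x => V x ^ m) C1 CW ε hε hPW (hU1 s) a
                (fun J => rfl) lev l _ ?_ ?_ ?_
              · intro J hJ
                exact (Finset.mem_filter.1 (Finset.mem_filter.1 hJ).1).2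
              · intro J hJ
                have := hcl1 J
                rwa [(Finset.mem_filter.1 hJ).2] at this
              · intro J hJ
                have := hcl2 J
                rwa [(Finset.mem_filter.1 hJ).2] at this
          _ = _ := by ring
    _ = (∑ l ∈ (G.filter sel).image cl, c ^ l.natAbs) * (P * (KC n m q C1 CW ε * Pi0)) := by
        rw [Finset.sum_mul]
    _ ≤ (2 * (1 - c)⁻¹) * (P * (KC n m q C1 CW ε * Pi0)) := by
        gcongr; exact sum_int_le c hc1 _
    _ = _ := by ring




lemma SLw_smul {n : ℕ} (w : ESp n → ℝ≥0∞) (C : ℝ≥0∞) (θ : ℝ) (h : SLw w C θ) (c : ℝ≥0∞)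
    (hc0 : c ≠ 0) (hct : c ≠ ⊤) : SLw (fun x => c * w x) C θ := by
  intro s J lam
  refine le_trans (measure_mono ?_) (h s J lam)
  rintro x ⟨hx, hx2⟩
  refine ⟨hx, ?_⟩
  change c * w x * volume (dq s J) ≤ lam * ∫⁻ y in dq s J, c * w y at hx2
  rw [lintegral_const_mul' _ _ hct, mul_assoc, mul_left_comm lam] at hx2
  exact (ENNReal.mul_le_mul_iff_right hc0 hct).1 hx2

lemma PWw_smul {n : ℕ} (w : ESp n → ℝ≥0∞) (C : ℝ≥0∞) (θ : ℝ) (h : PWw w C θ) (c : ℝ≥0∞)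
    (hct : c ≠ ⊤) : PWw (fun x => c * w x) C θ := by
  intro s J E hE hEJ ρ hρ
  rw [lintegral_const_mul' _ _ hct, lintegral_const_mul' _ _ hct, mul_left_comm]
  exact mul_le_mul' le_rfl (h s J E hE hEJ ρ hρ)

lemma pos_int {n : ℕ} (w : ESp n → ℝ≥0∞) (hw : Measurable w)
    (hw0 : ∀ᵐ x ∂(volume : Measure (ESp n)), w x ≠ 0) (s : Fin n → ℝ) (J : DIx n) :
    ∫⁻ y in dq s J, w y ≠ 0 := by
  intro h
  rw [setLIntegral_eq_zero_iff (meas_dq s J) hw] at h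
  apply vol_dq_ne_zero s J
  have : ∀ᵐ x ∂(volume : Measure (ESp n)), x ∉ dq s J := by
    filter_upwards [h, hw0] with x h1 h2 h3
    exact h2 (h1 h3)
  exact measure_eq_zero_iff_ae_notMem.2 this

lemma ae_neBot_dq {n : ℕ} (s : Fin n → ℝ) (J : DIx n) :
    (ae ((volume : Measure (ESp n)).restrict (dq s J))).NeBot := by
  rw [ae_neBot]
  intro h
  apply vol_dq_ne_zero s J
  rw [← Measure.restrict_apply_univ, h]; simp

lemma essInf_ne_top {n : ℕ} (w : ESp n → ℝ≥0∞) (hwt : ∀ x, w x ≠ ⊤) (s : Fin n → ℝ) (J : DIx n) :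
    essInf w (volume.restrict (dq s J)) ≠ ⊤ := by
  intro h
  have := ae_neBot_dq s J
  have h2 := ae_essInf_le (f := w) (μ := volume.restrict (dq s J))
  obtain ⟨x, hx⟩ := h2.exists
  rw [h, top_le_iff] at hx
  exact hwt x hx

/-- `A_1` on dyadic cubes -/
def A1d {n : ℕ} (w : ESp n → ℝ≥0∞) (C : ℝ≥0∞) : Prop :=
  ∀ s J, ∫⁻ y in dq s J, w y ≤ C * essInf w (volume.restrict (dq s J)) * volume (dq s J)

lemma A1d_fin {n : ℕ} {w : ESp n → ℝ≥0∞} {C : ℝ≥0∞} (hC : C ≠ ⊤) (h : A1d w C)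
    (hwt : ∀ x, w x ≠ ⊤) (s : Fin n → ℝ) (J : DIx n) : ∫⁻ y in dq s J, w y ≠ ⊤ :=
  ne_top_of_le_ne_top (ENNReal.mul_ne_top (ENNReal.mul_ne_top hC (essInf_ne_top w hwt s J))
    (vol_dq_ne_top s J)) (h s J)

lemma A1d_pos {n : ℕ} {w : ESp n → ℝ≥0∞} {C : ℝ≥0∞} (h : A1d w C) (hw : Measurable w)
    (hw0 : ∀ᵐ x ∂(volume : Measure (ESp n)), w x ≠ 0) (s : Fin n → ℝ) (J : DIx n) :
    essInf w (volume.restrict (dq s J)) ≠ 0 := by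
  intro h0
  have := h s J
  rw [h0] at this
  simp only [mul_zero, zero_mul, nonpos_iff_eq_zero] at this
  exact pos_int w hw hw0 s J this

lemma A1d_SL {n : ℕ} {w : ESp n → ℝ≥0∞} {C : ℝ≥0∞} (h : A1d w C) (hw : Measurable w)
    (hw0 : ∀ᵐ x ∂(volume : Measure (ESp n)), w x ≠ 0) (hwt : ∀ x, w x ≠ ⊤) : SLw w C 1 := by
  intro s J lam
  rw [ENNReal.rpow_one]
  rcases le_or_gt 1 (C * lam) with h1 | h1
  · calc _ ≤ volume (dq s J) := measure_mono inter_subset_left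
      _ = 1 * volume (dq s J) := (one_mul _).symm
      _ ≤ _ := by gcongr
  · refine le_trans (le_of_eq ?_) zero_le
    rw [measure_eq_zero_iff_ae_notMem]
    have h2 := ae_essInf_le (f := w) (μ := volume.restrict (dq s J))
    rw [ae_restrict_iff' (meas_dq s J)] at h2
    filter_upwards [h2] with x hx
    rintro ⟨hxJ, hx3⟩
    change w x * volume (dq s J) ≤ lam * ∫⁻ y in dq s J, w y at hx3
    set e := essInf w (volume.restrict (dq s J)) with he
    have he0 : e ≠ 0 := A1d_pos h hw hw0 s J
    have het : e ≠ ⊤ := essInf_ne_top w hwt s J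
    have hpos : e * volume (dq s J) ≠ 0 := mul_ne_zero he0 (vol_dq_ne_zero s J)
    have htop : e * volume (dq s J) ≠ ⊤ := ENNReal.mul_ne_top het (vol_dq_ne_top s J)
    have h4 : e * volume (dq s J) ≤ C * lam * (e * volume (dq s J)) := by
      calc e * volume (dq s J) ≤ w x * volume (dq s J) := by gcongr; exact hx hxJ
        _ ≤ lam * ∫⁻ y in dq s J, w y := hx3
        _ ≤ lam * (C * e * volume (dq s J)) := by gcongr; exact h s J
        _ = _ := by ring
    have h5 : C * lam * (e * volume (dq s J)) < 1 * (e * volume (dq s J)) :=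
      (ENNReal.mul_lt_mul_iff_left hpos htop).2 h1
    rw [one_mul] at h5
    exact absurd h4 (not_le.2 h5)

lemma A1d_of {n : ℕ} (u : ESp n → ℝ) (hu : IsWeight u) (r : ℝ) (hr : 0 < r)
    (hA : IsA1 (fun x => u x ^ r)) :
    ∃ C : ℝ≥0∞, C ≠ ⊤ ∧ A1d (fun x => ENNReal.ofReal (u x) ^ r) C := by
  obtain ⟨C, hC, hA⟩ := hA
  refine ⟨C, hC.ne, fun s J => ?_⟩
  obtain ⟨Q, hQ, hQm, hsub, hvol, hres⟩ := dq_cube s J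
  have h := hA Q hQ
  have e : ∀ x, ENNReal.ofReal (u x ^ r) = ENNReal.ofReal (u x) ^ r := fun x =>
    (ENNReal.ofReal_rpow_of_nonneg (hu.2.1 x) hr.le).symm
  simp only [wMeas, e] at h
  rw [← hres, ← hvol] at h
  rwa [mul_comm, ← div_eq_mul_inv, ENNReal.div_le_iff (vol_dq_ne_zero s J) (vol_dq_ne_top s J)] at h

lemma essInf_rpow_le {n : ℕ} (u : ESp n → ℝ≥0∞) (r : ℝ) (hr : 0 < r) (s : Fin n → ℝ) (J : DIx n) :
    essInf (fun x => u x ^ r) (volume.restrict (dq s J)) ≤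
      essInf u (volume.restrict (dq s J)) ^ r := by
  set e := essInf (fun x => u x ^ r) (volume.restrict (dq s J)) with he
  have key : ∀ y z : ℝ≥0∞, y ^ (1 / r) ≤ z ↔ y ≤ z ^ r := by
    intro y z
    rw [← ENNReal.rpow_le_rpow_iff hr, ← ENNReal.rpow_mul, one_div, inv_mul_cancel₀ hr.ne',
      ENNReal.rpow_one]
  have h : e ^ (1 / r) ≤ essInf u (volume.restrict (dq s J)) := by
    refine le_essInf_of_ae_le _ ?_
    filter_upwards [ae_essInf_le (f := fun x => u x ^ r) (μ := volume.restrict (dq s J))] with x hx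
    exact (key _ _).2 hx
  exact (key _ _).1 h

lemma Ap_SL {n : ℕ} (w : ESp n → ℝ≥0∞) (hw : Measurable w)
    (hw0 : ∀ᵐ x ∂(volume : Measure (ESp n)), w x ≠ 0) (hwt : ∀ x, w x ≠ ⊤) (p : ℝ) (hp : 1 < p)
    (C : ℝ≥0∞) (hC : C ≠ ⊤)
    (h : ∀ s J, ((volume (dq s J))⁻¹ * ∫⁻ y in dq s J, w y) *
      ((volume (dq s J))⁻¹ * ∫⁻ y in dq s J, w y ^ (1 - p / (p - 1))) ^ (p - 1) ≤ C) :
    (∀ s J, ∫⁻ y in dq s J, w y ≠ ⊤) ∧ SLw w ((C + 1) ^ (1 / (p - 1))) (1 / (p - 1)) := by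
  have hp1 : 0 < p - 1 := by linarith
  set β : ℝ := 1 / (p - 1) with hβ
  have hβ0 : 0 < β := by positivity
  have eβ : 1 - p / (p - 1) = -β := by rw [hβ]; field_simp; ring
  rw [eβ] at h
  have hwβ : ∀ x, w x ^ (-β) ≠ 0 := by
    intro x hx
    rw [ENNReal.rpow_eq_zero_iff] at hx
    rcases hx with ⟨_, h2⟩ | ⟨h1, _⟩
    · linarith
    · exact hwt x h1
  have hfin : ∀ s J, ∫⁻ y in dq s J, w y ≠ ⊤ := by
    intro s J hI
    have h1 := h s J
    have hv0 := vol_dq_ne_zero s J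
    have hvt := vol_dq_ne_top s J
    have h2 := pos_int (fun x => w x ^ (-β)) (hw.pow_const _) (Filter.Eventually.of_forall hwβ) s J
    rw [hI, ENNReal.mul_top (ENNReal.inv_ne_zero.2 hvt), ENNReal.top_mul] at h1
    · exact hC (top_le_iff.1 h1)
    · intro h3
      rw [ENNReal.rpow_eq_zero_iff_of_pos hp1] at h3
      rcases mul_eq_zero.1 h3 with h4 | h4
      · exact ENNReal.inv_ne_zero.2 hvt h4
      · exact h2 h4
  refine ⟨hfin, ?_⟩
  intro s J lam
  have hv0 := vol_dq_ne_zero s J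
  have hvt := vol_dq_ne_top s J
  have hC0 : (C + 1) ^ β ≠ 0 := (ENNReal.rpow_pos (by positivity) (by simp [hC])).ne'
  set I := ∫⁻ y in dq s J, w y with hI
  have hI0 : I ≠ 0 := pos_int w hw hw0 s J
  rcases eq_or_ne lam ⊤ with rfl | hlt
  · rw [ENNReal.top_rpow_of_pos hβ0, ENNReal.mul_top hC0, ENNReal.top_mul hv0]; exact le_top
  rcases eq_or_ne lam 0 with rfl | hl0
  · refine le_trans (le_of_eq ?_) zero_le
    rw [measure_eq_zero_iff_ae_notMem]
    filter_upwards [hw0] with x hx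
    rintro ⟨_, hx3⟩
    change w x * volume (dq s J) ≤ 0 * I at hx3
    rw [zero_mul, nonpos_iff_eq_zero, mul_eq_zero] at hx3
    exact hx3.elim hx hv0
  set E := dq s J ∩ {x | w x * volume (dq s J) ≤ lam * I} with hE
  have hEm : MeasurableSet E :=
    (meas_dq s J).inter (measurableSet_le (hw.mul_const _) measurable_const)
  set av := (volume (dq s J))⁻¹ * I with hav
  have hav0 : av ≠ 0 := mul_ne_zero (ENNReal.inv_ne_zero.2 hvt) hI0
  have havt : av ≠ ⊤ := ENNReal.mul_ne_top (ENNReal.inv_ne_top.2 hv0) (hfin s J)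
  set b := lam * av with hb
  have hb0 : b ≠ 0 := mul_ne_zero hl0 hav0
  have hbt : b ≠ ⊤ := ENNReal.mul_ne_top hlt havt
  set S := ∫⁻ y in dq s J, w y ^ (-β) with hS
  have h1 : b ^ (-β) * volume E ≤ S := by
    rw [← setLIntegral_const]
    refine (setLIntegral_mono' hEm fun x hx => ?_).trans (lintegral_mono_set inter_subset_left)
    have hx2 : w x * volume (dq s J) ≤ lam * I := hx.2
    have hx3 : w x ≤ b := by
      rw [← ENNReal.le_div_iff_mul_le (Or.inl hv0) (Or.inl hvt)] at hx2
      rw [hb, hav]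
      refine hx2.trans (le_of_eq ?_)
      rw [div_eq_mul_inv]; ring
    rw [ENNReal.rpow_neg, ENNReal.rpow_neg]
    exact ENNReal.inv_le_inv.2 (ENNReal.rpow_le_rpow hx3 hβ0.le)
  have h2 : volume E ≤ b ^ β * S := by
    calc volume E = b ^ β * (b ^ (-β) * volume E) := by
          rw [← mul_assoc, ← ENNReal.rpow_add _ _ hb0 hbt]; simp
      _ ≤ _ := by gcongr
  have h3 : av ^ β * ((volume (dq s J))⁻¹ * S) ≤ C ^ β := by
    have := ENNReal.rpow_le_rpow (h s J) hβ0.le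
    rw [ENNReal.mul_rpow_of_nonneg _ _ hβ0.le, ← ENNReal.rpow_mul _ (p - 1) β] at this
    have e : (p - 1) * β = 1 := by rw [hβ]; field_simp
    rw [e, ENNReal.rpow_one] at this
    exact this
  calc volume E ≤ b ^ β * S := h2
    _ = lam ^ β * (av ^ β * ((volume (dq s J))⁻¹ * S)) * volume (dq s J) := by
        rw [hb, ENNReal.mul_rpow_of_nonneg _ _ hβ0.le]
        calc lam ^ β * av ^ β * S = lam ^ β * av ^ β * S * ((volume (dq s J))⁻¹ * volume (dq s J)) := by
              rw [ENNReal.inv_mul_cancel hv0 hvt, mul_one]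
          _ = _ := by ring
    _ ≤ lam ^ β * (C + 1) ^ β * volume (dq s J) := by
        gcongr
        exact h3.trans (ENNReal.rpow_le_rpow le_self_add hβ0.le)
    _ = _ := by ring

lemma Ainf_SL {n : ℕ} (v : ESp n → ℝ) (hv : IsWeight v) (r : ℝ) (hr : 0 < r)
    (hA : IsAinfty (fun x => v x ^ r)) :
    (∀ s J, ∫⁻ y in dq s J, ENNReal.ofReal (v y) ^ r ≠ ⊤) ∧
    ∃ (C : ℝ≥0∞) (θ : ℝ), C ≠ ⊤ ∧ 0 < θ ∧ SLw (fun x => ENNReal.ofReal (v x) ^ r) C θ := by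
  have hm : Measurable (fun x => ENNReal.ofReal (v x) ^ r) :=
    (ENNReal.measurable_ofReal.comp hv.1).pow_const r
  have h0 : ∀ᵐ x ∂(volume : Measure (ESp n)), ENNReal.ofReal (v x) ^ r ≠ 0 := by
    filter_upwards [hv.2.2.1] with x hx
    exact (ENNReal.rpow_pos (ENNReal.ofReal_pos.2 hx) ENNReal.ofReal_ne_top).ne'
  have ht : ∀ x, ENNReal.ofReal (v x) ^ r ≠ ⊤ := fun x =>
    ENNReal.rpow_ne_top_of_nonneg hr.le ENNReal.ofReal_ne_top
  rcases hA with hA | ⟨p, hp, C, hC, hA⟩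
  · obtain ⟨C, hC, hA⟩ := A1d_of v hv r hr hA
    exact ⟨A1d_fin hC hA ht, C, 1, hC, one_pos, A1d_SL hA hm h0 ht⟩
  · have hh := Ap_SL (fun x => ENNReal.ofReal (v x) ^ r) hm h0 ht p hp C hC.ne ?_
    · have hp1 : 0 < p - 1 := by linarith
      exact ⟨hh.1, _, _, ENNReal.rpow_ne_top_of_nonneg (by positivity) (by simp [hC.ne]),
        by positivity, hh.2⟩
    · intro s J
      obtain ⟨Q, hQ, hQm, hsub, hvol, hres⟩ := dq_cube s J
      have h := hA Q hQ
      have e : ∀ x, ENNReal.ofReal (v x ^ r) = ENNReal.ofReal (v x) ^ r := fun x =>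
        (ENNReal.ofReal_rpow_of_nonneg (hv.2.1 x) hr.le).symm
      simp only [wMeas, e] at h
      rwa [← hres, ← hvol] at h




lemma int_cube {n : ℕ} (u : ESp n → ℝ≥0∞) (hu0 : ∀ s J, essInf u (volume.restrict (dq s J)) ≠ 0)
    (f : ESp n → ℝ≥0∞) (c : Fin n → ℝ) (h : ℝ) (hh : 0 < h) :
    ∃ e : ℝ≥0∞, e ≠ 0 ∧ e * ∫⁻ y in cbox c h, f y ≤ ∫⁻ y, f y * u y := by
  obtain ⟨N, hN⟩ := pow_unbounded_of_one_lt (6 * h) (show (1 : ℝ) < 2 by norm_num)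
  obtain ⟨b, J, hsub, -⟩ := cover_cube (N : ℤ) c h hh (by rw [zpow_natCast]; exact hN.le)
  refine ⟨_, hu0 (shft N b) J, ?_⟩
  calc _ ≤ essInf u (volume.restrict (dq (shft N b) J)) * ∫⁻ y in dq (shft N b) J, f y := by
        gcongr
    _ ≤ ∫⁻ y in dq (shft N b) J, essInf u (volume.restrict (dq (shft N b) J)) * f y :=
        lintegral_const_mul_le _ _
    _ ≤ ∫⁻ y in dq (shft N b) J, f y * u y := by
        refine lintegral_mono_ae ?_
        filter_upwards [ae_essInf_le (f := u) (μ := volume.restrict (dq (shft N b) J))] with y hy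
        rw [mul_comm]; gcongr
    _ ≤ _ := setLIntegral_le_lintegral _ _

/-- the big cube -/
def bigQ (n : ℕ) (R : ℕ) : Set (ESp n) := cbox (fun _ => -((R : ℝ) + 1)) (2 * ((R : ℝ) + 1))

/-- the truncated level set -/
def FR {n m : ℕ} (r : ℝ) (f : Fin m → ESp n → ℝ≥0∞) (z : ESp n → ℝ≥0∞) (R : ℕ) : Set (ESp n) :=
  {x | ∃ (c : Fin n → ℝ) (h : ℝ), 0 < h ∧ x ∈ cbox c h ∧ cbox c h ⊆ bigQ n R ∧
    z x < ∏ i, (volume (cbox c h) ^ (1 / r))⁻¹ * ∫⁻ y in cbox c h, f i y}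

lemma bigQ_mono (n : ℕ) : Monotone (bigQ n) := by
  intro R R' h x hx i
  have := hx i
  have h' : (R : ℝ) ≤ R' := by exact_mod_cast h
  constructor <;> linarith [this.1, this.2]

lemma FR_mono {n m : ℕ} (r : ℝ) (f : Fin m → ESp n → ℝ≥0∞) (z : ESp n → ℝ≥0∞) :
    Monotone (FR r f z) := by
  rintro R R' h x ⟨c, l, hl, hx, hsub, hz⟩
  exact ⟨c, l, hl, hx, hsub.trans (bigQ_mono n h), hz⟩

lemma cbox_sub_big {n : ℕ} (c : Fin n → ℝ) (h : ℝ) : ∃ R : ℕ, cbox c h ⊆ bigQ n R := by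
  obtain ⟨R, hR⟩ := exists_nat_ge (∑ i, |c i| + |h|)
  refine ⟨R, fun x hx i => ?_⟩
  have h1 : |c i| ≤ ∑ i, |c i| :=
    Finset.single_le_sum (f := fun i => |c i|) (fun _ _ => abs_nonneg _) (Finset.mem_univ i)
  have h2 := hx i
  have := neg_abs_le (c i)
  have := le_abs_self (c i)
  have := le_abs_self h
  have := abs_nonneg h
  constructor <;> linarith [h2.1, h2.2]

lemma side_le {n : ℕ} (hn : 0 < n) (c : Fin n → ℝ) (h : ℝ) (hh : 0 < h) (R : ℕ)
    (hs : cbox c h ⊆ bigQ n R) : h ≤ 2 * ((R : ℝ) + 1) := by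
  have h1 : (WithLp.toLp 2 c : ESp n) ∈ cbox c h := fun i => ⟨le_rfl, by simp; exact hh.le⟩
  have h2 : (WithLp.toLp 2 (fun i => c i + h) : ESp n) ∈ cbox c h :=
    fun i => ⟨by simp; exact hh.le, le_rfl⟩
  have a1 := (hs h1 ⟨0, hn⟩).1
  have a2 := (hs h2 ⟨0, hn⟩).2
  simp at a1 a2
  linarith

lemma FR_sub {n m : ℕ} (hn : 0 < n) (hm : 0 < m) (q : ℝ) (hq0 : 0 < q)
    (f : Fin m → ESp n → ℝ≥0∞) (z : ESp n → ℝ≥0∞) (R : ℕ) (N : ℤ)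
    (hN : 6 * (2 * ((R : ℝ) + 1)) ≤ 2 ^ N) :
    FR (m * q) f z R ⊆ ⋃ b : Fin n → Bool, {x | ∃ J, x ∈ dq (shft N b) J ∧
      (((6 : ℝ≥0∞) ^ n)⁻¹ * z x ^ q) * volume (dq (shft N b) J) <
        ∏ j, (∫⁻ y in dq (shft N b) J, (bigQ n R).indicator (f j) y) ^ q} := by
  rintro x ⟨c, h, hh, hx, hsub, hz⟩
  have hm' : (m : ℝ) ≠ 0 := by positivity
  have hle := side_le hn c h hh R hsub
  obtain ⟨b, J, hJ, hvol⟩ := cover_cube N c h hh (by linarith)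
  refine mem_iUnion.2 ⟨b, J, hJ hx, ?_⟩
  set v := volume (cbox c h) with hv
  have hv0 : v ≠ 0 := by rw [hv, vol_cbox]; simp [hh]
  have hvt : v ≠ ⊤ := by rw [hv, vol_cbox]; exact ENNReal.pow_ne_top ENNReal.ofReal_ne_top
  have h1 := (ENNReal.rpow_lt_rpow_iff hq0).2 hz
  have e1 : (∏ i, (v ^ (1 / (m * q)))⁻¹ * ∫⁻ y in cbox c h, f i y) ^ q =
      v⁻¹ * ∏ i, (∫⁻ y in cbox c h, f i y) ^ q := by
    rw [← ENNReal.prod_rpow_of_nonneg hq0.le]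
    simp_rw [ENNReal.mul_rpow_of_nonneg _ _ hq0.le]
    rw [Finset.prod_mul_distrib]
    congr 1
    rw [Finset.prod_const, ← ENNReal.rpow_neg, ← ENNReal.rpow_natCast, ← ENNReal.rpow_mul,
      ← ENNReal.rpow_mul, ← ENNReal.rpow_neg_one]
    congr 1
    simp; field_simp
  rw [e1, mul_comm v⁻¹, ← div_eq_mul_inv, ENNReal.lt_div_iff_mul_lt (Or.inl hv0) (Or.inl hvt)] at h1
  have h60 : (6 : ℝ≥0∞) ^ n ≠ 0 := by positivity
  have h6t : (6 : ℝ≥0∞) ^ n ≠ ⊤ := ENNReal.pow_ne_top (by simp)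
  calc (((6 : ℝ≥0∞) ^ n)⁻¹ * z x ^ q) * volume (dq (shft N b) J)
      ≤ (((6 : ℝ≥0∞) ^ n)⁻¹ * z x ^ q) * (6 ^ n * v) := by gcongr
    _ = (((6 : ℝ≥0∞) ^ n)⁻¹ * 6 ^ n) * (z x ^ q * v) := by ring
    _ = z x ^ q * v := by rw [ENNReal.inv_mul_cancel h60 h6t, one_mul]
    _ < _ := h1
    _ ≤ _ := by
        refine Finset.prod_le_prod' fun j _ => ENNReal.rpow_le_rpow ?_ hq0.le
        calc ∫⁻ y in cbox c h, f j y = ∫⁻ y in cbox c h, (bigQ n R).indicator (f j) y := by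
              refine setLIntegral_congr_fun (meas_cbox c h) fun y hy => ?_
              rw [indicator_of_mem (hsub hy)]
          _ ≤ _ := lintegral_mono_set hJ

/-- the level set estimate -/
lemma level_est {n m : ℕ} (hn : 0 < n) (hm : 0 < m) (q : ℝ) (hq0 : 0 < q)
    (u : Fin m → ESp n → ℝ≥0∞)
    (hu0 : ∀ j s J, essInf (u j) (volume.restrict (dq s J)) ≠ 0)
    (v : ESp n → ℝ≥0∞) (hv : Measurable v)
    (hv0 : ∀ᵐ x ∂(volume : Measure (ESp n)), v x ≠ 0) (hvt : ∀ x, v x ≠ ⊤)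
    (CS CW : ℝ≥0∞) (θ ε : ℝ)
    (hSL : SLw (fun x => v x ^ (m * q)) CS θ) (hPW : PWw (fun x => v x ^ (m * q)) CW ε)
    (hWfin : ∀ s J, ∫⁻ y in dq s J, v y ^ (m * q) ≠ ⊤)
    (K : ℝ≥0∞)
    (hK : ∀ (s : Fin n → ℝ) (V : ESp n → ℝ≥0∞) (f : Fin m → ESp n → ℝ≥0∞),
      Measurable V → (∀ᵐ x ∂(volume : Measure (ESp n)), V x ≠ 0) → (∀ x, V x ≠ ⊤) →
      SLw (fun x => V x ^ m) CS θ → PWw (fun x => V x ^ m) CW ε →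
      (∀ J, ∫⁻ y in dq s J, V y ^ m ≠ ⊤) → (∀ j, ∫⁻ y, f j y ≠ ⊤) →
      ∫⁻ x in {x | ∃ J, x ∈ dq s J ∧ V x * volume (dq s J) < ∏ j, (∫⁻ y in dq s J, f j y) ^ q},
        (∏ j, u j x ^ q) * V x ≤ K * ∏ j, (∫⁻ y, f j y * u j y) ^ q)
    (f : Fin m → ESp n → ℝ≥0∞) (hf : ∀ j, ∫⁻ y, f j y * u j y ≠ ⊤)
    (t : ℝ≥0∞) (ht0 : t ≠ 0) (htt : t ≠ ⊤) (R : ℕ) :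
    t ^ q * ∫⁻ x in FR (m * q) f (fun x => t * v x) R, (∏ j, u j x ^ q) * v x ^ q ≤
      6 ^ n * 2 ^ n * K * ∏ j, (∫⁻ y, f j y * u j y) ^ q := by
  have hm' : (m : ℝ) ≠ 0 := by positivity
  have h60 : (6 : ℝ≥0∞) ^ n ≠ 0 := by positivity
  have h6t : (6 : ℝ≥0∞) ^ n ≠ ⊤ := ENNReal.pow_ne_top (by simp)
  obtain ⟨N, hN⟩ := pow_unbounded_of_one_lt (6 * (2 * ((R : ℝ) + 1))) (show (1 : ℝ) < 2 by norm_num)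
  have hsub := FR_sub hn hm q hq0 f (fun x => t * v x) R (N : ℤ) (by rw [zpow_natCast]; exact hN.le)
  set τ : ℝ≥0∞ := ((6 : ℝ≥0∞) ^ n)⁻¹ * t ^ q with hτ
  have htq0 : t ^ q ≠ 0 := (ENNReal.rpow_pos ht0.bot_lt htt).ne'
  have htqt : t ^ q ≠ ⊤ := ENNReal.rpow_ne_top_of_nonneg hq0.le htt
  have hτ0 : τ ≠ 0 := mul_ne_zero (ENNReal.inv_ne_zero.2 h6t) htq0
  have hτt : τ ≠ ⊤ := ENNReal.mul_ne_top (ENNReal.inv_ne_top.2 h60) htqt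
  set V : ESp n → ℝ≥0∞ := fun x => τ * v x ^ q with hV
  have eV : ∀ x, ((6 : ℝ≥0∞) ^ n)⁻¹ * (t * v x) ^ q = V x := by
    intro x; rw [ENNReal.mul_rpow_of_nonneg _ _ hq0.le, hV, hτ]; ring
  have eVm : ∀ x, V x ^ m = τ ^ m * v x ^ (m * q) := by
    intro x
    rw [hV, mul_pow, ← ENNReal.rpow_natCast (v x ^ q), ← ENNReal.rpow_mul, mul_comm q]
  have eVm' : (fun x => V x ^ m) = fun x => τ ^ m * v x ^ (m * q) := funext eVm
  have hτmt : τ ^ m ≠ ⊤ := ENNReal.pow_ne_top hτt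
  set g : Fin m → ESp n → ℝ≥0∞ := fun j => (bigQ n R).indicator (f j) with hg
  have hgu : ∀ j, ∫⁻ y, g j y * u j y ≤ ∫⁻ y, f j y * u j y := by
    intro j
    refine lintegral_mono fun y => ?_
    gcongr
    exact indicator_le_self _ _ y
  have hgf : ∀ j, ∫⁻ y, g j y ≠ ⊤ := by
    intro j
    obtain ⟨e, he0, he⟩ := int_cube (u j) (hu0 j) (f j) (fun _ => -((R : ℝ) + 1))
      (2 * ((R : ℝ) + 1)) (by positivity)
    have e1 : ∫⁻ y, g j y = ∫⁻ y in bigQ n R, f j y := lintegral_indicator (meas_cbox _ _) _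
    rw [e1]
    intro htop
    have : e * ∫⁻ y in bigQ n R, f j y ≤ ∫⁻ y, f j y * u j y := he
    rw [htop, ENNReal.mul_top he0, top_le_iff] at this
    exact hf j this
  have hb : ∀ b : Fin n → Bool, ∫⁻ x in {x | ∃ J, x ∈ dq (shft N b) J ∧
      (((6 : ℝ≥0∞) ^ n)⁻¹ * (t * v x) ^ q) * volume (dq (shft N b) J) <
        ∏ j, (∫⁻ y in dq (shft N b) J, (bigQ n R).indicator (f j) y) ^ q},
        (∏ j, u j x ^ q) * V x ≤ K * ∏ j, (∫⁻ y, f j y * u j y) ^ q := by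
    intro b
    simp_rw [eV]
    refine (hK (shft N b) V g ((hv.pow_const q).const_mul τ) ?_ ?_ ?_ ?_ ?_ hgf).trans ?_
    · filter_upwards [hv0] with x hx
      exact mul_ne_zero hτ0 (ENNReal.rpow_pos hx.bot_lt (hvt x)).ne'
    · intro x
      exact ENNReal.mul_ne_top hτt (ENNReal.rpow_ne_top_of_nonneg hq0.le (hvt x))
    · rw [eVm']; exact SLw_smul _ _ _ hSL _ (pow_ne_zero _ hτ0) hτmt
    · rw [eVm']; exact PWw_smul _ _ _ hPW _ hτmt
    · intro J
      simp_rw [eVm]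
      rw [lintegral_const_mul' _ _ hτmt]
      exact ENNReal.mul_ne_top hτmt (hWfin _ _)
    · refine mul_le_mul' le_rfl (Finset.prod_le_prod' fun j _ => ?_)
      exact ENNReal.rpow_le_rpow (hgu j) hq0.le
  have h1 : ∫⁻ x in FR (m * q) f (fun x => t * v x) R, (∏ j, u j x ^ q) * V x ≤
      2 ^ n * (K * ∏ j, (∫⁻ y, f j y * u j y) ^ q) := by
    refine (lintegral_mono_set hsub).trans ((lintegral_iUnion_le _ _).trans ?_)
    rw [tsum_fintype]
    refine (Finset.sum_le_sum fun b _ => hb b).trans (le_of_eq ?_)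
    simp
  have h2 : ∫⁻ x in FR (m * q) f (fun x => t * v x) R, (∏ j, u j x ^ q) * V x =
      τ * ∫⁻ x in FR (m * q) f (fun x => t * v x) R, (∏ j, u j x ^ q) * v x ^ q := by
    rw [← lintegral_const_mul' _ _ hτt]
    refine lintegral_congr fun x => ?_
    rw [hV]; ring
  rw [h2] at h1
  set I := ∫⁻ x in FR (m * q) f (fun x => t * v x) R, (∏ j, u j x ^ q) * v x ^ q with hI
  calc t ^ q * I = 6 ^ n * (τ * I) := by
        rw [hτ, ← mul_assoc, ← mul_assoc, ENNReal.mul_inv_cancel h60 h6t, one_mul]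
    _ ≤ 6 ^ n * (2 ^ n * (K * ∏ j, (∫⁻ y, f j y * u j y) ^ q)) := by gcongr
    _ = _ := by ring



lemma multi_lt {n m : ℕ} (α r : ℝ) (he : 1 - α / ((m : ℝ) * (n : ℝ)) = 1 / r)
    (f : Fin m → ESp n → ℝ) (x : ESp n) (z : ℝ≥0∞) (h : z < multiMα α f x) :
    ∃ (c : Fin n → ℝ) (l : ℝ), 0 < l ∧ x ∈ cbox c l ∧
      z < ∏ i, (volume (cbox c l) ^ (1 / r))⁻¹ * ∫⁻ y in cbox c l, ENNReal.ofReal |f i y| := by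
  unfold multiMα at h
  rw [lt_iSup_iff] at h
  obtain ⟨Q, h⟩ := h
  rw [lt_iSup_iff] at h
  obtain ⟨⟨c, l, hl, rfl⟩, h⟩ := h
  rw [lt_iSup_iff] at h
  obtain ⟨hx, h⟩ := h
  rw [he] at h
  exact ⟨c, l, hl, hx, h⟩

lemma final_fin {n m : ℕ} (q : ℝ) (hq0 : 0 < q) (α : ℝ)
    (he : 1 - α / ((m : ℝ) * (n : ℝ)) = 1 / (m * q))
    (u : Fin m → ESp n → ℝ) (v : ESp n → ℝ) (hu : ∀ i, IsWeight (u i)) (hv : IsWeight v)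
    (f : Fin m → ESp n → ℝ) (B P : ℝ≥0∞) (t : ℝ) (ht : 0 < t)
    (hR : ∀ R, ENNReal.ofReal t ^ q * ∫⁻ x in FR (m * q) (fun i x => ENNReal.ofReal |f i x|)
        (fun x => ENNReal.ofReal t * ENNReal.ofReal (v x)) R,
        (∏ j, ENNReal.ofReal (u j x) ^ q) * ENNReal.ofReal (v x) ^ q ≤ B * P ^ q) :
    ENNReal.ofReal t * (wMeas (fun x => (∏ i, u i x ^ q) * v x ^ q)
      {x | ENNReal.ofReal t < multiMα α f x / ENNReal.ofReal (v x)}) ^ (1 / q) ≤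
      B ^ (1 / q) * P := by
  set g : ESp n → ℝ≥0∞ := fun x => (∏ j, ENNReal.ofReal (u j x) ^ q) * ENNReal.ofReal (v x) ^ q
    with hg
  set F := FR (m * q) (fun i x => ENNReal.ofReal |f i x|)
        (fun x => ENNReal.ofReal t * ENNReal.ofReal (v x)) with hF
  set E := {x | ENNReal.ofReal t < multiMα α f x / ENNReal.ofReal (v x)} with hE
  have e1 : ∀ x, ENNReal.ofReal ((∏ i, u i x ^ q) * v x ^ q) = g x := by
    intro x
    rw [ENNReal.ofReal_mul (Finset.prod_nonneg fun i _ => Real.rpow_nonneg ((hu i).2.1 x) _),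
      ENNReal.ofReal_prod_of_nonneg (fun i _ => Real.rpow_nonneg ((hu i).2.1 x) _),
      ← ENNReal.ofReal_rpow_of_nonneg (hv.2.1 x) hq0.le]
    simp only [hg]
    congr 1
    exact Finset.prod_congr rfl fun i _ =>
      (ENNReal.ofReal_rpow_of_nonneg ((hu i).2.1 x) hq0.le).symm
  have hsub : E ⊆ {x | ¬ 0 < v x} ∪ ⋃ R, F R := by
    intro x hx
    by_cases hvx : 0 < v x
    · right
      have h1 : ENNReal.ofReal t * ENNReal.ofReal (v x) < multiMα α f x := by
        rwa [hE, mem_setOf_eq, ENNReal.lt_div_iff_mul_lt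
          (Or.inl (ENNReal.ofReal_pos.2 hvx).ne') (Or.inl ENNReal.ofReal_ne_top)] at hx
      obtain ⟨c, l, hl, hxc, hlt⟩ := multi_lt α _ he f x _ h1
      obtain ⟨R, hRR⟩ := cbox_sub_big c l
      exact mem_iUnion.2 ⟨R, c, l, hl, hxc, hRR, hlt⟩
    · left; exact hvx
  have hmu : wMeas (fun x => (∏ i, u i x ^ q) * v x ^ q) E ≤ ⨆ R, ∫⁻ x in F R, g x := by
    unfold wMeas
    simp only [e1]
    have hac := withDensity_absolutelyContinuous (volume : Measure (ESp n)) g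
    have h0 : volume.withDensity g {x | ¬ 0 < v x} = 0 := hac (ae_iff.1 hv.2.2.1)
    calc ∫⁻ x in E, g x = volume.withDensity g E := (withDensity_apply' g E).symm
      _ ≤ volume.withDensity g ({x | ¬ 0 < v x} ∪ ⋃ R, F R) := measure_mono hsub
      _ ≤ volume.withDensity g {x | ¬ 0 < v x} + volume.withDensity g (⋃ R, F R) :=
          measure_union_le _ _
      _ = ⨆ R, volume.withDensity g (F R) := by
          rw [h0, zero_add, Monotone.measure_iUnion (FR_mono _ _ _)]
      _ = _ := by simp only [withDensity_apply']
  have h2 : ENNReal.ofReal t ^ q * wMeas (fun x => (∏ i, u i x ^ q) * v x ^ q) E ≤ B * P ^ q := by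
    calc _ ≤ ENNReal.ofReal t ^ q * ⨆ R, ∫⁻ x in F R, g x := by gcongr
      _ ≤ _ := by rw [ENNReal.mul_iSup]; exact iSup_le hR
  have h3 := ENNReal.rpow_le_rpow h2 (show 0 ≤ 1 / q by positivity)
  rw [ENNReal.mul_rpow_of_nonneg _ _ (by positivity), ENNReal.mul_rpow_of_nonneg _ _ (by positivity),
    ← ENNReal.rpow_mul, ← ENNReal.rpow_mul, mul_one_div_cancel hq0.ne', ENNReal.rpow_one,
    ENNReal.rpow_one] at h3
  exact h3


/-- **Theorem on `𝓜_α`, second weight condition.**  Let `0 ≤ α < mn`, `q = n/(mn-α)`,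
`ν = ∏ uᵢ^q`.  If `u₁^{mq},…,u_m^{mq} ∈ A₁` and `v^{mq} ∈ A_∞`, then there is `C` such
that `‖𝓜_α(f⃗)/v‖_{L^{q,∞}(ν v^q)} ≤ C ∏ ‖fᵢ‖_{L¹(uᵢ)}`. -/
theorem multilinear_fracMaximal_mixed_second {n m : ℕ} (hn : 0 < n) (hm : 0 < m)
    (α q : ℝ) (hα0 : 0 ≤ α) (hα : α < (m : ℝ) * (n : ℝ))
    (hq : q = (n : ℝ) / ((m : ℝ) * (n : ℝ) - α))
    (u : Fin m → ESp n → ℝ) (v : ESp n → ℝ)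
    (hu : ∀ i, IsWeight (u i)) (hv : IsWeight v)
    (hA1 : ∀ i, IsA1 (fun x => u i x ^ ((m : ℝ) * q)))
    (hAinf : IsAinfty (fun x => v x ^ ((m : ℝ) * q))) :
    ∃ C : ℝ≥0∞, C < ⊤ ∧
      ∀ f : Fin m → ESp n → ℝ,
        wnorm (fun x => multiMα α f x / ENNReal.ofReal (v x)) q
            (fun x => (∏ i, u i x ^ q) * v x ^ q)
          ≤ C * ∏ i, L1norm (f i) (u i) := by
  have hn' : (0 : ℝ) < n := by exact_mod_cast hn
  have hm' : (0 : ℝ) < m := by exact_mod_cast hm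
  have hd : 0 < (m : ℝ) * (n : ℝ) - α := by linarith
  have hq0 : 0 < q := by rw [hq]; positivity
  have hr0 : 0 < (m : ℝ) * q := by positivity
  have hr1 : 1 ≤ (m : ℝ) * q := by
    rw [hq, ← mul_div_assoc, le_div_iff₀ hd]; linarith
  have he : 1 - α / ((m : ℝ) * (n : ℝ)) = 1 / (m * q) := by
    rw [hq]; field_simp
  have hum : ∀ j, Measurable (fun x => ENNReal.ofReal (u j x)) := fun j =>
    ENNReal.measurable_ofReal.comp (hu j).1
  have hu0' : ∀ j, ∀ᵐ x ∂(volume : Measure (ESp n)),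
      ENNReal.ofReal (u j x) ^ ((m : ℝ) * q) ≠ 0 := fun j => by
    filter_upwards [(hu j).2.2.1] with x hx
    exact (ENNReal.rpow_pos (ENNReal.ofReal_pos.2 hx) ENNReal.ofReal_ne_top).ne'
  have hut : ∀ j x, ENNReal.ofReal (u j x) ^ ((m : ℝ) * q) ≠ ⊤ := fun j x =>
    ENNReal.rpow_ne_top_of_nonneg hr0.le ENNReal.ofReal_ne_top
  choose Cj hCj hAj using fun j => A1d_of (u j) (hu j) _ hr0 (hA1 j)
  have hpp := fun j => pow_prop hn _ ((hum j).pow_const _) (Cj j) (hCj j) 1 one_pos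
    (A1d_SL (hAj j) ((hum j).pow_const _) (hu0' j) (hut j)) (A1d_fin (hCj j) (hAj j) (hut j))
  choose CU δ hCU hδ hPU using hpp
  have hu0 : ∀ j s J, essInf (fun x => ENNReal.ofReal (u j x)) (volume.restrict (dq s J)) ≠ 0 := by
    intro j s J h0
    have h1 := essInf_rpow_le (fun x => ENNReal.ofReal (u j x)) _ hr0 s J
    rw [h0, ENNReal.zero_rpow_of_pos hr0] at h1
    exact A1d_pos (hAj j) ((hum j).pow_const _) (hu0' j) s J (le_antisymm h1 zero_le)
  have hU1 : ∀ s j J, ∫⁻ y in dq s J, ENNReal.ofReal (u j y) ^ ((m : ℝ) * q) ≤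
      (∑ j, Cj j) * essInf (fun x => ENNReal.ofReal (u j x)) (volume.restrict (dq s J)) ^ ((m : ℝ) * q)
        * volume (dq s J) := by
    intro s j J
    refine (hAj j s J).trans ?_
    gcongr
    · exact Finset.single_le_sum (f := Cj) (fun _ _ => zero_le) (Finset.mem_univ j)
    · exact essInf_rpow_le (fun x => ENNReal.ofReal (u j x)) _ hr0 s J
  have hvm : Measurable (fun x => ENNReal.ofReal (v x)) := ENNReal.measurable_ofReal.comp hv.1
  have hv0 : ∀ᵐ x ∂(volume : Measure (ESp n)), ENNReal.ofReal (v x) ≠ 0 := by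
    filter_upwards [hv.2.2.1] with x hx
    exact (ENNReal.ofReal_pos.2 hx).ne'
  obtain ⟨hWfin, CS, θ, hCS, hθ, hSL⟩ := Ainf_SL v hv _ hr0 hAinf
  obtain ⟨CW, ε, hCW, hε, hPW⟩ := pow_prop hn _ (hvm.pow_const _) CS hCS θ hθ hSL hWfin
  obtain ⟨K, hKt, hK⟩ := core hn hm q hq0 hr1 (fun j x => ENNReal.ofReal (u j x)) hum CU hCU δ hδ hPU
    (∑ j, Cj j) (ENNReal.sum_ne_top.2 fun j _ => hCj j) hU1 CS CW hCS hCW θ ε hθ hε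
  have hBt : (6 ^ n * 2 ^ n * K : ℝ≥0∞) ≠ ⊤ :=
    ENNReal.mul_ne_top (ENNReal.mul_ne_top (ENNReal.pow_ne_top (by simp))
      (ENNReal.pow_ne_top (by simp))) hKt
  refine ⟨(6 ^ n * 2 ^ n * K) ^ (1 / q) + 1, ENNReal.add_lt_top.2
    ⟨ENNReal.rpow_lt_top_of_nonneg (by positivity) hBt, by simp⟩, fun f => ?_⟩
  have hN : ∀ j, L1norm (f j) (u j) = ∫⁻ y, ENNReal.ofReal |f j y| * ENNReal.ofReal (u j y) := by
    intro j
    simp only [L1norm, ENNReal.ofReal_mul (abs_nonneg _)]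
  refine iSup_le fun t => iSup_le fun ht => ?_
  by_cases hfin : ∀ j, L1norm (f j) (u j) ≠ ⊤
  · refine (final_fin q hq0 α he u v hu hv f (6 ^ n * 2 ^ n * K) (∏ i, L1norm (f i) (u i)) t ht
      fun R => ?_).trans ?_
    · rw [← ENNReal.prod_rpow_of_nonneg hq0.le]
      simp only [hN] at hfin ⊢
      exact level_est hn hm q hq0 (fun j x => ENNReal.ofReal (u j x)) hu0
        (fun x => ENNReal.ofReal (v x)) hvm hv0 (fun x => ENNReal.ofReal_ne_top) CS CW θ ε hSL hPW
        hWfin K hK (fun i x => ENNReal.ofReal |f i x|) hfin _ (ENNReal.ofReal_pos.2 ht).ne'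
        ENNReal.ofReal_ne_top R
    · gcongr; exact le_self_add
  · push Not at hfin
    obtain ⟨k, hk⟩ := hfin
    by_cases hz : ∃ i, L1norm (f i) (u i) = 0
    · obtain ⟨i, hi⟩ := hz
      have hempty : {x | ENNReal.ofReal t < multiMα α f x / ENNReal.ofReal (v x)} = ∅ := by
        refine eq_empty_of_forall_notMem fun x hx => ?_
        have hM : multiMα α f x ≠ 0 := by
          intro h0
          rw [mem_setOf_eq, h0, ENNReal.zero_div] at hx
          exact ENNReal.not_lt_zero hx
        obtain ⟨c, l, hl, -, hlt⟩ := multi_lt α _ he f x 0 (pos_iff_ne_zero.2 hM)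
        refine hlt.ne' (Finset.prod_eq_zero (Finset.mem_univ i) ?_)
        obtain ⟨e, he0, hle⟩ := int_cube (fun x => ENNReal.ofReal (u i x)) (hu0 i)
          (fun x => ENNReal.ofReal |f i x|) c l hl
        rw [← hN, hi] at hle
        have := (mul_eq_zero.1 (le_antisymm hle zero_le)).resolve_left he0
        rw [this, mul_zero]
      rw [hempty]
      simp [wMeas, hq0]
    · push Not at hz
      have : ∏ i, L1norm (f i) (u i) = ⊤ := by
        rw [← Finset.mul_prod_erase _ _ (Finset.mem_univ k), hk]
        exact ENNReal.top_mul (Finset.prod_ne_zero_iff.2 fun i _ => hz i)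
      rw [this, ENNReal.mul_top (by simp)]
      exact le_top


end
end

section
/- (Pointwise domination of M_α by M) Let 0≤α<mn and q = n/(mn−α), and let u_1,…,u_m be weights on ℝ^n. Then for all nonnegative measurable functions f_1,…,f_m and every x ∈ ℝ^n, M_α(f_1,…,f_m)(x) ≤ M(f_1 u_1^{1−mq},…,f_m u_m^{1−mq})(x)^{1/(mq)} · ∏_{i=1}^m (∫_{ℝ^n} f_i u_i)^{α/(mn)}. -/
open MeasureTheory ENNReal Set

noncomputable section

/-- **Pointwise domination of `𝓜_α` by `𝓜`.**  Let `0 ≤ α < mn` and `q = n/(mn-α)`.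
Then for nonnegative measurable `f₁,…,f_m` and every `x`,
`𝓜_α(f⃗)(x) ≤ 𝓜(f₁u₁^{1-mq},…,f_mu_m^{1-mq})(x)^{1/(mq)} ∏ (∫ fᵢuᵢ)^{α/(mn)}`. -/
theorem pointwise_fracMaximal_le {n m : ℕ} (hn : 0 < n) (hm : 0 < m)
    (α q : ℝ) (hα0 : 0 ≤ α) (hα : α < (m : ℝ) * (n : ℝ))
    (hq : q = (n : ℝ) / ((m : ℝ) * (n : ℝ) - α))
    (u : Fin m → ESp n → ℝ) (hu : ∀ i, IsWeight (u i))
    (f : Fin m → ESp n → ℝ) (hfm : ∀ i, Measurable (f i)) (hf0 : ∀ i x, 0 ≤ f i x)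
    (x : ESp n) :
    multiMα α f x ≤
      (multiM (fun i y => f i y * u i y ^ (1 - (m : ℝ) * q)) x) ^ (((m : ℝ) * q)⁻¹) *
        ∏ i, (∫⁻ y, ENNReal.ofReal (f i y * u i y)) ^ (α / ((m : ℝ) * (n : ℝ))) := by
  have hn' : (0:ℝ) < n := by exact_mod_cast hn
  have hm' : (0:ℝ) < m := by exact_mod_cast hm
  have hmn : (0:ℝ) < (m:ℝ) * n := mul_pos hm' hn'
  have hd : (0:ℝ) < (m:ℝ) * n - α := by linarith
  set b : ℝ := α / ((m : ℝ) * (n : ℝ)) with hb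
  have hb0 : 0 ≤ b := div_nonneg hα0 hmn.le
  have ha : ((m:ℝ) * q)⁻¹ = 1 - b := by
    rw [hq, hb]; field_simp
  have ha0 : 0 < 1 - b := by
    rw [← ha, hq]; positivity
  have hmq : (m:ℝ) * q = (1 - b)⁻¹ := by rw [← ha, inv_inv]
  rw [ha]
  set a : ℝ := 1 - b with hadef
  rw [hmq]
  unfold multiMα
  refine iSup_le fun Q => iSup_le fun hQ => iSup_le fun hx => ?_
  have key : ∀ i, ((volume Q) ^ a)⁻¹ * ∫⁻ y in Q, ENNReal.ofReal |f i y| ≤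
      ((volume Q)⁻¹ * ∫⁻ y in Q, ENNReal.ofReal |f i y * u i y ^ (1 - a⁻¹)|) ^ a *
        (∫⁻ y, ENNReal.ofReal (f i y * u i y)) ^ b := by
    intro i
    obtain ⟨hum, hu0, hupos, -⟩ := hu i
    rw [ENNReal.mul_rpow_of_nonneg _ _ ha0.le, ENNReal.inv_rpow, mul_assoc]
    gcongr
    have hfi := hfm i
    calc ∫⁻ y in Q, ENNReal.ofReal |f i y|
        = ∫⁻ y in Q, ENNReal.ofReal |f i y * u i y ^ (1 - a⁻¹)| ^ a *
            ENNReal.ofReal (f i y * u i y) ^ b := by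
          refine lintegral_congr_ae (ae_restrict_of_ae ?_)
          filter_upwards [hupos] with y hy
          have hf := hf0 i y
          have h1 : 0 ≤ f i y * u i y ^ (1 - a⁻¹) := by positivity
          have h2 : 0 ≤ f i y * u i y := by positivity
          rw [abs_of_nonneg hf, abs_of_nonneg h1,
            ENNReal.ofReal_rpow_of_nonneg h1 ha0.le,
            ENNReal.ofReal_rpow_of_nonneg h2 hb0,
            ← ENNReal.ofReal_mul (by positivity)]
          congr 1
          rw [Real.mul_rpow hf (by positivity), Real.mul_rpow hf hy.le,
            ← Real.rpow_mul hy.le]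
          have e1 : (1 - a⁻¹) * a = -b := by
            field_simp; rw [hadef]; ring
          rw [e1]
          have e2 : u i y ^ (-b) * u i y ^ b = 1 := by
            rw [← Real.rpow_add hy]; simp
          have e3 : f i y ^ a * f i y ^ b = f i y := by
            rw [← Real.rpow_add_of_nonneg hf ha0.le hb0]; simp [hadef]
          calc f i y = (f i y ^ a * f i y ^ b) * (u i y ^ (-b) * u i y ^ b) := by
                rw [e2, e3, mul_one]
            _ = _ := by ring
      _ ≤ (∫⁻ y in Q, ENNReal.ofReal |f i y * u i y ^ (1 - a⁻¹)|) ^ a *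
            (∫⁻ y in Q, ENNReal.ofReal (f i y * u i y)) ^ b := by
          refine ENNReal.lintegral_mul_norm_pow_le ?_ ?_ ha0.le hb0 (by simp [hadef])
          · exact (((hfi.mul (hum.pow_const _)).norm).ennreal_ofReal).aemeasurable
          · exact (hfi.mul hum).ennreal_ofReal.aemeasurable
      _ ≤ _ := by
          gcongr
          exact Measure.restrict_le_self
  calc _ ≤ ∏ i, (((volume Q)⁻¹ * ∫⁻ y in Q, ENNReal.ofReal |f i y * u i y ^ (1 - a⁻¹)|) ^ a *
        (∫⁻ y, ENNReal.ofReal (f i y * u i y)) ^ b) := Finset.prod_le_prod' fun i _ => key i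
    _ = (∏ i, ((volume Q)⁻¹ * ∫⁻ y in Q, ENNReal.ofReal |f i y * u i y ^ (1 - a⁻¹)|)) ^ a *
        ∏ i, (∫⁻ y, ENNReal.ofReal (f i y * u i y)) ^ b := by
        rw [Finset.prod_mul_distrib, ENNReal.prod_rpow_of_nonneg ha0.le]
    _ ≤ _ := by
        gcongr
        unfold multiM
        exact le_iSup_of_le Q (le_iSup_of_le hQ (le_iSup_of_le hx le_rfl))

end
end
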